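/- Assume the Continuum Hypothesis. Every productively Lindelöf topological space that has a point-𝔠 base is powerfully Lindelöf. -/

import Mathlib

open Set Cardinal Topology

universe u v

/-- A space is quasi-Lindelöf if every open cover has a countable subcover
(no separation axioms assumed). -/
def QuasiLindelofSp (X : Type u) [TopologicalSpace X] : Prop :=
  ∀ 𝒰 : Set (Set X), (∀ U ∈ 𝒰, IsOpen U) → ⋃₀ 𝒰 = Set.univ →
    ∃ 𝒱 ⊆ 𝒰, 𝒱.Countable ∧ ⋃₀ 𝒱 = Set.univ

/-- Lindelöf in the sense of Engelking: regular (T3, including T1) and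
every open cover has a countable subcover. -/
def EngLindelofSp (X : Type u) [TopologicalSpace X] : Prop :=
  RegularSpace X ∧ T1Space X ∧ QuasiLindelofSp X

/-- X is productively Lindelöf if X × Y is Lindelöf for every Lindelöf space Y. -/
def ProductivelyLindelofSp (X : Type u) [TopologicalSpace X] : Prop :=
  ∀ (Y : Type u) [TopologicalSpace Y], EngLindelofSp Y → EngLindelofSp (X × Y)

/-- X is productively quasi-Lindelöf if X × Y is quasi-Lindelöf for every Lindelöf space Y. -/
def ProductivelyQuasiLindelofSp (X : Type u) [TopologicalSpace X] : Prop :=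
  ∀ (Y : Type u) [TopologicalSpace Y], EngLindelofSp Y → QuasiLindelofSp (X × Y)

/-- X is powerfully Lindelöf if X^ω is Lindelöf. -/
def PowerfullyLindelofSp (X : Type u) [TopologicalSpace X] : Prop :=
  EngLindelofSp (ℕ → X)

/-- X is powerfully quasi-Lindelöf if X^ω is quasi-Lindelöf. -/
def PowerfullyQuasiLindelofSp (X : Type u) [TopologicalSpace X] : Prop :=
  QuasiLindelofSp (ℕ → X)

/-- Tightness of X is at most κ. -/
def TightnessLE (X : Type u) [TopologicalSpace X] (κ : Cardinal.{u}) : Prop :=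
  ∀ (A : Set X) (x : X), x ∈ closure A → ∃ B ⊆ A, #B ≤ κ ∧ x ∈ closure B

/-- X has countable tightness. -/
def CountableTightness (X : Type u) [TopologicalSpace X] : Prop :=
  ∀ (A : Set X) (x : X), x ∈ closure A → ∃ B ⊆ A, B.Countable ∧ x ∈ closure B

/-- The Lindelöf number of X is at most κ: every open cover has a subcover of size ≤ κ. -/
def LindelofNumberLE (X : Type u) [TopologicalSpace X] (κ : Cardinal.{u}) : Prop :=
  ∀ 𝒰 : Set (Set X), (∀ U ∈ 𝒰, IsOpen U) → ⋃₀ 𝒰 = Set.univ →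
    ∃ 𝒱 ⊆ 𝒰, #𝒱 ≤ κ ∧ ⋃₀ 𝒱 = Set.univ

/-- The weight of X is at most κ: there is a base of size ≤ κ. -/
def WeightLE (X : Type u) [TopologicalSpace X] (κ : Cardinal.{u}) : Prop :=
  ∃ B : Set (Set X), TopologicalSpace.IsTopologicalBasis B ∧ #B ≤ κ

/-- N is a network for X. -/
def IsNetwork (X : Type u) [TopologicalSpace X] (N : Set (Set X)) : Prop :=
  ∀ (x : X) (U : Set X), IsOpen U → x ∈ U → ∃ n ∈ N, x ∈ n ∧ n ⊆ U

/-- X is linearly Lindelöf: regular (incl. T1) and every open cover linearly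
ordered by inclusion has a countable subcover. -/
def LinearlyLindelofSp (X : Type u) [TopologicalSpace X] : Prop :=
  RegularSpace X ∧ T1Space X ∧
    ∀ 𝒰 : Set (Set X), (∀ U ∈ 𝒰, IsOpen U) → IsChain (· ⊆ ·) 𝒰 → ⋃₀ 𝒰 = Set.univ →
      ∃ 𝒱 ⊆ 𝒰, 𝒱.Countable ∧ ⋃₀ 𝒱 = Set.univ

/-- U ⊆ X^ω is a basic open set: a product of open sets, all but finitely many of
which equal X. -/
def IsBasicOpen (X : Type u) [TopologicalSpace X] (U : Set (ℕ → X)) : Prop :=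
  ∃ V : ℕ → Set X, (∀ i, IsOpen (V i)) ∧ {i | V i ≠ Set.univ}.Finite ∧
    U = Set.pi Set.univ V

/-- A family of subsets of Z is point-κ if every point belongs to at most κ members. -/
def PointLE {Z : Type u} (𝒲 : Set (Set Z)) (κ : Cardinal.{u}) : Prop :=
  ∀ z : Z, #({W ∈ 𝒲 | z ∈ W}) ≤ κ

/-- A non-empty space is zero-dimensional if it is T1 and has a base of clopen sets. -/
def ZeroDimensionalSp (Y : Type u) [TopologicalSpace Y] : Prop :=
  Nonempty Y ∧ T1Space Y ∧
    ∃ B : Set (Set Y), TopologicalSpace.IsTopologicalBasis B ∧ ∀ b ∈ B, IsClopen b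

/-!
Under CH a productively Lindelöf space of weight at most `𝔠` has the Alster property, and the
countable power of an Alster space is Lindelöf. Call a set null for a filter `l` closed under
countable intersections if it has a Gδ hull whose complement is in `l`; the Alster property says
that compact sets are all null only for the trivial `l`. If `X ⊆ 2^ω₁` violates this, then along a
chain of `ω₁` countable families of open sets there are points of `X` generic at every level, and,
at unboundedly many levels `γ`, generic points that differ below `γ` from every point of `X`.
Masked by generic masks, the former concentrate on the Lindelöf set of codes of the latter;
isolating them yields a Lindelöf space whose product with `X` is not Lindelöf. A point-`𝔠` base
reduces the general case to weight `𝔠`: closures of sets of size at most `𝔠` have weight at most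
`𝔠`, `X^ω` inherits a point-`𝔠` base, and closing off under countable subfamilies of the base shows
that a space with such a base is Lindelöf as soon as closures of its subsets of size at most `𝔠`
are.
-/

open Filter TopologicalSpace

section Cardinality

variable {α : Type u} {ι : Type v}

theorem mk_iUnion_le_continuum {A : ι → Set α} (hι : #ι ≤ 𝔠) (hA : ∀ i, #(A i) ≤ 𝔠) :
    #(⋃ i, A i) ≤ 𝔠 := by
  rw [← Cardinal.lift_le.{v}, lift_continuum]
  calc lift.{v} #(⋃ i, A i)
    _ ≤ lift.{u} #ι * ⨆ i, lift.{v} #(A i) := mk_iUnion_le_lift A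
    _ ≤ 𝔠 * 𝔠 := mul_le_mul' (lift_le_continuum.2 hι)
      (ciSup_le' fun i => lift_le_continuum.2 (hA i))
    _ = 𝔠 := continuum_mul_self

theorem mk_biUnion_le_continuum {s : Set ι} {A : ι → Set α} (hs : #s ≤ 𝔠)
    (hA : ∀ i ∈ s, #(A i) ≤ 𝔠) : #(⋃ i ∈ s, A i) ≤ 𝔠 := by
  rw [biUnion_eq_iUnion]
  exact mk_iUnion_le_continuum hs fun i => hA i i.2

theorem mk_le_continuum_of_countable {s : Set α} (hs : s.Countable) : #s ≤ 𝔠 :=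
  (le_aleph0_iff_set_countable.2 hs).trans aleph0_le_continuum

theorem mk_countable_subsets_le_continuum {s : Set α} (hs : #s ≤ 𝔠) :
    #{t : Set α | t ⊆ s ∧ t.Countable} ≤ 𝔠 :=
  calc #{t : Set α | t ⊆ s ∧ t.Countable}
    _ = #{t : Set α // t ⊆ s ∧ #t ≤ ℵ₀} := by simp only [le_aleph0_iff_set_countable]; rfl
    _ ≤ max #s ℵ₀ ^ ℵ₀ := mk_bounded_subset_le s ℵ₀
    _ ≤ 𝔠 ^ ℵ₀ := power_le_power_right (max_le hs aleph0_le_continuum)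
    _ = 𝔠 := continuum_power_aleph0

theorem mk_insert_le_continuum {s : Set α} {a : α} (hs : #s ≤ 𝔠) :
    #(insert a s : Set α) ≤ 𝔠 :=
  mk_insert_le.trans (add_le_of_le aleph0_le_continuum hs (one_le_aleph0.trans aleph0_le_continuum))

end Cardinality

/-! ### Productively Lindelöf spaces -/

section Lindelof

variable {X : Type u} {Y : Type v} [TopologicalSpace X] [TopologicalSpace Y]

theorem exists_countable_subset_sUnion_of_isLindelof {s : Set X} (hs : IsLindelof s)
    {𝒰 : Set (Set X)} (h𝒰 : ∀ U ∈ 𝒰, IsOpen U) (hcover : s ⊆ ⋃₀ 𝒰) :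
    ∃ 𝒱 ⊆ 𝒰, 𝒱.Countable ∧ s ⊆ ⋃₀ 𝒱 := by
  obtain ⟨t, ht, hst⟩ := hs.elim_countable_subcover (fun U : 𝒰 => (U : Set X))
    (fun U => h𝒰 U U.2) (by rwa [← sUnion_eq_iUnion])
  exact ⟨Subtype.val '' t, image_subset_iff.2 fun U _ => U.2, ht.image _,
    by rwa [sUnion_image]⟩

theorem quasiLindelofSp_iff_lindelofSpace : QuasiLindelofSp X ↔ LindelofSpace X := by
  constructor
  · intro h
    refine isLindelof_univ_iff.1 (isLindelof_of_countable_subcover fun {ι} U hU hcover => ?_)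
    obtain ⟨𝒱, h𝒱, h𝒱c, h𝒱u⟩ := h (range U) (forall_mem_range.2 hU)
      (by rw [sUnion_range]; exact univ_subset_iff.1 hcover)
    choose i hi using fun V : 𝒱 => h𝒱 V.2
    have := h𝒱c.to_subtype
    refine ⟨range i, countable_range i, ?_⟩
    rw [biUnion_range, iUnion_congr hi, ← sUnion_eq_iUnion, h𝒱u]
  · intro h 𝒰 h𝒰 hcover
    obtain ⟨𝒱, h𝒱, h𝒱c, h𝒱u⟩ :=
      exists_countable_subset_sUnion_of_isLindelof isLindelof_univ h𝒰 hcover.superset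
    exact ⟨𝒱, h𝒱, h𝒱c, univ_subset_iff.1 h𝒱u⟩

theorem engLindelofSp_iff : EngLindelofSp X ↔ T3Space X ∧ LindelofSpace X := by
  rw [EngLindelofSp, quasiLindelofSp_iff_lindelofSpace, ← and_assoc]
  exact and_congr_left fun _ => ⟨fun ⟨_, _⟩ => {}, fun _ => ⟨inferInstance, inferInstance⟩⟩

theorem lindelofSpace_prod_of_compactSpace [CompactSpace X] [LindelofSpace Y] :
    LindelofSpace (X × Y) := by
  refine isLindelof_univ_iff.1 (isLindelof_of_countable_subcover fun {ι} U hU hcover => ?_)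
  have exists_tube : ∀ y : Y, ∃ t : Finset ι, ∃ V ∈ 𝓝 y,
      (univ : Set X) ×ˢ V ⊆ ⋃ i ∈ t, U i := by
    intro y
    obtain ⟨t, ht⟩ := (isCompact_univ.prod (isCompact_singleton (x := y))).elim_finite_subcover U hU
      ((subset_univ ((univ : Set X) ×ˢ {y})).trans hcover)
    obtain ⟨A, V, -, hV, hA, hyV, hAV⟩ := generalized_tube_lemma isCompact_univ
      isCompact_singleton (isOpen_biUnion fun i _ => hU i) ht
    exact ⟨t, V, hV.mem_nhds (hyV rfl), (prod_mono_left hA).trans hAV⟩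
  choose t V hV hVt using exists_tube
  obtain ⟨s, hs, hsV⟩ := LindelofSpace.elim_nhds_subcover V hV
  refine ⟨⋃ y ∈ s, t y, hs.biUnion fun y _ => (t y).countable_toSet, fun ⟨x, y⟩ _ => ?_⟩
  obtain ⟨y', hy', hy⟩ := mem_iUnion₂.1 (hsV.superset (mem_univ y))
  obtain ⟨i, hi, hxy⟩ := mem_iUnion₂.1 (hVt y' (mk_mem_prod (mem_univ x) hy))
  exact mem_biUnion (mem_biUnion hy' hi) hxy

end Lindelof

namespace ProductivelyLindelofSp

variable {X Y : Type u} [TopologicalSpace X] [TopologicalSpace Y]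

theorem lindelofSpace_prod (hX : ProductivelyLindelofSp X) [T3Space Y] [LindelofSpace Y] :
    LindelofSpace (X × Y) :=
  (engLindelofSp_iff.1 (hX Y (engLindelofSp_iff.2 ⟨inferInstance, inferInstance⟩))).2

theorem t3Space (hX : ProductivelyLindelofSp X) : T3Space X :=
  have := (engLindelofSp_iff.1 (hX PUnit
    (engLindelofSp_iff.2 ⟨inferInstance, inferInstance⟩))).1
  (Homeomorph.prodPUnit X).symm.isEmbedding.t3Space

theorem lindelofSpace (hX : ProductivelyLindelofSp X) : LindelofSpace X :=
  have := hX.lindelofSpace_prod (Y := PUnit)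
  LindelofSpace.of_continuous_surjective (Homeomorph.prodPUnit X).continuous
    (Homeomorph.prodPUnit X).surjective

theorem of_lindelofSpace_prod [T3Space X]
    (h : ∀ (Y : Type u) [TopologicalSpace Y] [T3Space Y] [LindelofSpace Y],
      LindelofSpace (X × Y)) : ProductivelyLindelofSp X := fun Y _ hY =>
  have := (engLindelofSp_iff.1 hY).1
  have := (engLindelofSp_iff.1 hY).2
  engLindelofSp_iff.2 ⟨inferInstance, h Y⟩

theorem of_isClosedEmbedding (hY : ProductivelyLindelofSp Y) {f : X → Y}
    (hf : IsClosedEmbedding f) : ProductivelyLindelofSp X :=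
  have := hY.t3Space
  have := hf.isEmbedding.t3Space
  of_lindelofSpace_prod fun Z _ _ _ =>
    have := hY.lindelofSpace_prod (Y := Z)
    (hf.prodMap IsClosedEmbedding.id).LindelofSpace

theorem of_continuous_surjective (hX : ProductivelyLindelofSp X) [T3Space Y] {f : X → Y}
    (hf : Continuous f) (hfs : Function.Surjective f) : ProductivelyLindelofSp Y :=
  of_lindelofSpace_prod fun Z _ _ _ =>
    have := hX.lindelofSpace_prod (Y := Z)
    LindelofSpace.of_continuous_surjective (hf.prodMap continuous_id)
      (hfs.prodMap Function.surjective_id)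

theorem prod_of_compactSpace (hX : ProductivelyLindelofSp X) [CompactSpace Y] [T2Space Y] :
    ProductivelyLindelofSp (X × Y) :=
  have := hX.t3Space
  of_lindelofSpace_prod fun Z _ _ _ =>
    have : LindelofSpace (Y × Z) := lindelofSpace_prod_of_compactSpace
    have := hX.lindelofSpace_prod (Y := Y × Z)
    LindelofSpace.of_continuous_surjective (Homeomorph.prodAssoc X Y Z).symm.continuous
      (Homeomorph.prodAssoc X Y Z).symm.surjective

end ProductivelyLindelofSp

section MichaelType

variable {I X E : Type*} [TopologicalSpace X] [TopologicalSpace E]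

instance countableInterFilter_cocountable : CountableInterFilter (cocountable : Filter I) :=
  CardinalInterFilter.toCountableInterFilter _ aleph0_lt_aleph_one

theorem cocountable_le_cofinite : (cocountable : Filter I) ≤ cofinite := fun _ hs =>
  mem_cocountable.2 (mem_cofinite.1 hs).countable

instance neBot_cocountable [Uncountable I] : (cocountable : Filter I).NeBot :=
  ⟨fun h => not_countable_univ (α := I) (by simpa using mem_cocountable.1 (empty_mem_iff_bot.2 h))⟩

theorem tendsto_prodMk_nhdsSet_of_isLindelof {l : Filter I} [CountableInterFilter l] {Z : Set X}
    (hZ : IsLindelof Z) {y : E} {a : I → X} {b : I → E} (ha : Tendsto a l (𝓝ˢ Z))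
    (hb : Tendsto b l (𝓝 y)) : Tendsto (fun i => (a i, b i)) l (𝓝ˢ (Z ×ˢ {y})) := by
  intro O hO
  have exists_box : ∀ z ∈ Z, ∃ A B, IsOpen A ∧ z ∈ A ∧ IsOpen B ∧ y ∈ B ∧ A ×ˢ B ⊆ O :=
    fun z hz => mem_nhds_prod_iff'.1 (mem_nhdsSet_iff_forall.1 hO (z, y) (mk_mem_prod hz rfl))
  choose! A B hA hzA hB hyB hAB using exists_box
  obtain ⟨t, ht, htZ, hZt⟩ :=
    hZ.elim_nhds_subcover A fun z hz => (hA z hz).mem_nhds (hzA z hz)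
  have hAt : ∀ᶠ i in l, a i ∈ ⋃ z ∈ t, A z :=
    ha ((isOpen_biUnion fun z hz => hA z (htZ z hz)).mem_nhdsSet.2 hZt)
  have hBt : ∀ᶠ i in l, ∀ z ∈ t, b i ∈ B z :=
    (eventually_countable_ball ht).2 fun z hz => hb ((hB z (htZ z hz)).mem_nhds (hyB z (htZ z hz)))
  refine (hAt.and hBt).mono fun i ⟨hAi, hBi⟩ => ?_
  obtain ⟨z, hz, haz⟩ := mem_iUnion₂.1 hAi
  exact hAB z (htZ z hz) ⟨haz, hBi z hz⟩

theorem isLindelof_union_range_of_tendsto_cocountable {Z : Set E} (hZ : IsLindelof Z)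
    {a : I → E} (ha : Tendsto a cocountable (𝓝ˢ Z)) : IsLindelof (Z ∪ range a) := by
  refine isLindelof_of_countable_subcover fun {ι} U hU hcover => ?_
  obtain ⟨t, ht, hZt⟩ := hZ.elim_countable_subcover U hU (subset_union_left.trans hcover)
  have hbad : {i | a i ∉ ⋃ k ∈ t, U k}.Countable :=
    mem_cocountable.1 (ha ((isOpen_biUnion fun k _ => hU k).mem_nhdsSet.2 hZt))
  have ha_mem : ∀ i, ∃ k, a i ∈ U k := fun i =>
    mem_iUnion.1 (hcover (mem_union_right Z (mem_range_self i)))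
  choose k hk using ha_mem
  refine ⟨t ∪ k '' {i | a i ∉ ⋃ k ∈ t, U k}, ht.union (hbad.image k), union_subset
    (hZt.trans (biUnion_mono subset_union_left fun _ _ => subset_rfl)) ?_⟩
  rintro _ ⟨i, rfl⟩
  by_cases hi : a i ∈ ⋃ k ∈ t, U k
  · exact biUnion_mono subset_union_left (fun _ _ => subset_rfl) hi
  · exact mem_biUnion (mem_union_right t (mem_image_of_mem k hi)) (hk i)

theorem tendsto_decide_eq_cofinite [DecidableEq I] :
    Tendsto (fun i j : I => decide (i = j)) cofinite (𝓝 fun _ => false) := by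
  refine tendsto_pi_nhds.2 fun j => tendsto_nhds_of_eventually_eq ?_
  filter_upwards [(finite_singleton j).compl_mem_cofinite] with i hi
  exact decide_eq_false hi

end MichaelType

-- The points `a i`, isolated by an extra coordinate, are adjoined to the Lindelöf set `Z`; the
-- product of `X` with the resulting Lindelöf space has no uncountable locally countable family.
theorem ProductivelyLindelofSp.exists_mem_closure_range {I X E : Type u} [TopologicalSpace X]
    [TopologicalSpace E] [T3Space E] [Uncountable I] (hX : ProductivelyLindelofSp X) {Z : Set E}
    (hZ : IsLindelof Z) {a : I → E} (ha : Tendsto a cocountable (𝓝ˢ Z)) (x : I → X) :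
    ∃ x₀, ∃ z ∈ Z, (x₀, z) ∈ closure (range fun i => (x i, a i)) := by
  classical
  let e : I → I → Bool := fun i j => decide (i = j)
  let L : Set (E × (I → Bool)) := Z ×ˢ {fun _ => false} ∪ range fun i => (a i, e i)
  have hL : IsLindelof L := isLindelof_union_range_of_tendsto_cocountable
    (by rw [prod_singleton]; exact hZ.image (by fun_prop))
    (tendsto_prodMk_nhdsSet_of_isLindelof hZ ha
      (tendsto_decide_eq_cofinite.mono_left cocountable_le_cofinite))
  have := isLindelof_iff_lindelofSpace.1 hL
  have := hX.lindelofSpace_prod (Y := L)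
  let p : I → X × L := fun i => (x i, ⟨(a i, e i), Or.inr (mem_range_self i)⟩)
  obtain ⟨⟨x₀, ⟨z, c⟩, hzc⟩, hclu⟩ := cluster_point_of_Lindelof (map p cocountable)
  rcases hzc with hzc | ⟨i, hi⟩
  · have hproj : MapClusterPt (x₀, z) cocountable fun i => (x i, a i) :=
      MapClusterPt.continuousAt_comp (f := Prod.map id fun y : L => y.1.1)
        (by fun_prop) (mapClusterPt_def.2 hclu)
    exact ⟨x₀, z, hzc.1, mem_closure_iff_clusterPt.2
      (hproj.clusterPt.mono (le_principal_iff.2 range_mem_map))⟩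
  · have hisolated : ∀ᶠ q : X × L in 𝓝 (x₀, ⟨(z, c), Or.inr ⟨i, hi⟩⟩), q.2.1.2 i = true :=
      ((isOpen_discrete {true}).preimage
        (f := fun q : X × L => q.2.1.2 i) (by fun_prop)).mem_nhds
        (by simp [← (Prod.mk.inj hi).2, e])
    have hfreq := (mapClusterPt_def.2 hclu).frequently hisolated
    refine absurd (hfreq.and_eventually
      (cocountable_le_cofinite (finite_singleton i).compl_mem_cofinite)).exists ?_
    rintro ⟨j, hj, hji⟩
    exact hji (of_decide_eq_true hj)

/-! ### Open Lindelöf sets and enumerations of length `ω₁ = 𝔠` -/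

section OpenLindelof

variable {X : Type u} [TopologicalSpace X] {B : Set (Set X)}

theorem exists_countable_subset_sUnion_eq (hB : IsTopologicalBasis B) {U : Set X}
    (hUo : IsOpen U) (hU : IsLindelof U) : ∃ 𝒱 ⊆ B, 𝒱.Countable ∧ U = ⋃₀ 𝒱 := by
  obtain ⟨𝒱, h𝒱, h𝒱c, hU𝒱⟩ := exists_countable_subset_sUnion_of_isLindelof hU
    (𝒰 := {V ∈ B | V ⊆ U}) (fun V hV => hB.isOpen hV.1) (hB.open_eq_sUnion' hUo).subset
  exact ⟨𝒱, h𝒱.trans (sep_subset _ _), h𝒱c, hU𝒱.antisymm (sUnion_subset fun V hV => (h𝒱 hV).2)⟩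

/-- The open Lindelöf subsets of a space. In a compact Hausdorff space these are the cozero sets. -/
def openLindelofSets (X : Type*) [TopologicalSpace X] : Set (Set X) :=
  {U | IsOpen U ∧ IsLindelof U}

theorem mk_openLindelofSets_le_continuum (hB : IsTopologicalBasis B) (hBc : #B ≤ 𝔠) :
    #(openLindelofSets X) ≤ 𝔠 := by
  have hsub : openLindelofSets X ⊆ sUnion '' {t | t ⊆ B ∧ t.Countable} := by
    rintro U ⟨hUo, hU⟩
    obtain ⟨t, ht, htc, rfl⟩ := exists_countable_subset_sUnion_eq hB hUo hU
    exact mem_image_of_mem _ ⟨ht, htc⟩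
  exact (mk_le_mk_of_subset hsub).trans (mk_image_le.trans (mk_countable_subsets_le_continuum hBc))

end OpenLindelof

/-- `IsOmegaOneContinuum I` says that `I` is a well-order of cardinality `𝔠` all of whose initial
segments are countable, that is, `I` has order type `ω₁ = 𝔠`. Such an `I` serves as the index set
of all transfinite enumerations; one exists exactly under the continuum hypothesis. -/
class IsOmegaOneContinuum (I : Type u) [LinearOrder I] : Prop extends WellFoundedLT I where
  countable_Iic : ∀ i : I, (Iic i).Countable
  mk_eq_continuum : #I = 𝔠

theorem continuum_eq_aleph_one_of_continuum_eq_aleph_one (hCH : continuum.{v} = aleph.{v} 1) :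
    continuum.{u} = aleph.{u} 1 := by
  apply lift_injective.{v, u}
  have h := congrArg lift.{u, v} hCH
  rw [lift_continuum, lift_aleph, Ordinal.lift_one] at h
  rw [lift_continuum, lift_aleph, Ordinal.lift_one, h]

theorem exists_isOmegaOneContinuum (hCH : continuum.{u} = aleph.{u} 1) :
    ∃ (I : Type u) (_ : LinearOrder I), IsOmegaOneContinuum I := by
  refine ⟨(aleph.{u} 1).ord.ToType, inferInstance,
    { countable_Iic := fun i => ?_, mk_eq_continuum := (mk_ord_toType _).trans hCH.symm }⟩
  have hIio : #(Iio i) ≤ ℵ₀ :=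
    Order.lt_succ_iff.1 <| (mk_Iio_lt i (by simp)).trans_eq <|
      (mk_ord_toType _).trans succ_aleph0.symm
  rw [← Iio_insert]
  exact (le_aleph0_iff_set_countable.1 hIio).insert i

theorem countable_finset_forall_mem {α : Type*} {s : Set α} (hs : s.Countable) :
    {t : Finset α | ∀ a ∈ t, a ∈ s}.Countable :=
  ((countable_ofPred_finite_subset hs).preimage_of_injOn Finset.coe_injective.injOn).mono
    fun t ht => show _ ∧ _ from ⟨t.finite_toSet, ht⟩

namespace IsOmegaOneContinuum

variable {I : Type u} [LinearOrder I] [IsOmegaOneContinuum I]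

theorem countable_Iio (i : I) : (Iio i).Countable :=
  (countable_Iic i).mono Iio_subset_Iic_self

instance uncountable : Uncountable I := by
  rw [← not_countable_iff, ← mk_le_aleph0_iff, mk_eq_continuum, not_le]
  exact aleph0_lt_continuum

theorem exists_forall_lt_of_countable {s : Set I} (hs : s.Countable) : ∃ γ, ∀ i ∈ s, i < γ := by
  by_contra! h
  refine not_countable_univ (α := I) ((hs.biUnion fun i _ => countable_Iic i).mono fun γ _ => ?_)
  obtain ⟨i, hi, hγi⟩ := h γ
  exact mem_biUnion hi hγi

theorem Ioi_mem_cocountable (γ : I) : Ioi γ ∈ (cocountable : Filter I) :=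
  mem_cocountable.2 (by rw [compl_Ioi]; exact countable_Iic γ)

theorem exists_surjective {T : Type u} [Nonempty T] (hT : #T ≤ 𝔠) :
    ∃ f : I → T, Function.Surjective f := by
  obtain ⟨e⟩ : #T ≤ #I := by rwa [mk_eq_continuum (I := I)]
  exact ⟨Function.invFun e, Function.invFun_surjective e.injective⟩

theorem exists_gt_forall_lt_of_rank {J : Type*} {ρ : J → I} (hρ : ∀ i, {j | ρ j ≤ i}.Countable)
    (h : Finset J → I) (δ : I) :
    ∃ γ > δ, ∀ F : Finset J, (∀ j ∈ F, ρ j < γ) → h F < γ := by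
  have exists_bound : ∀ d, ∃ d' > d, ∀ F : Finset J, (∀ j ∈ F, ρ j ≤ d) → h F < d' := by
    intro d
    obtain ⟨d', hd'⟩ := exists_forall_lt_of_countable
      (((countable_finset_forall_mem (hρ d)).image h).insert d)
    exact ⟨d', hd' d (mem_insert d _),
      fun F hF => hd' _ (mem_insert_of_mem d (mem_image_of_mem h hF))⟩
  choose next lt_next h_lt_next using exists_bound
  let q : ℕ → I := fun n => next^[n] δ
  have hq_succ : ∀ n, q (n + 1) = next (q n) := fun n => Function.iterate_succ_apply' next n δ
  have hq_mono : StrictMono q := strictMono_nat_of_lt_succ fun n => (lt_next (q n)).trans_eq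
    (hq_succ n).symm
  obtain ⟨γ, hγ, hγ_min⟩ := (wellFounded_lt (α := I)).has_min {γ | ∀ n, q n < γ}
    ((exists_forall_lt_of_countable (countable_range q)).imp fun γ h n => h (q n) ⟨n, rfl⟩)
  refine ⟨γ, hγ 0, fun F hF => ?_⟩
  have exists_le : ∀ j ∈ F, ∃ n, ρ j ≤ q n := fun j hj => by
    by_contra! hj'
    exact hγ_min (ρ j) hj' (hF j hj)
  choose! n hn using exists_le
  calc h F
    _ < next (q (F.sup n)) := h_lt_next _ F fun j hj =>
      (hn j hj).trans (hq_mono.monotone (F.le_sup hj))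
    _ = q (F.sup n + 1) := (hq_succ _).symm
    _ < γ := hγ _

end IsOmegaOneContinuum

section CantorCube

variable {J : Type u}

/-- The clopen subset of the Cantor cube `J → Bool` given by the finitely many constraints
`f p.1 = p.2`, `p ∈ F`. Contradictory constraints are allowed and give the empty set. -/
def boolCylinder (F : Finset (J × Bool)) : Set (J → Bool) :=
  {f | ∀ p ∈ F, f p.1 = p.2}

theorem isClopen_boolCylinder (F : Finset (J × Bool)) : IsClopen (boolCylinder F) := by
  have h : boolCylinder F = ⋂ p ∈ F, (fun f : J → Bool => f p.1) ⁻¹' {p.2} := by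
    ext; simp [boolCylinder]
  rw [h]
  exact isClopen_biInter_finset fun p _ =>
    (isClopen_discrete {p.2}).preimage (continuous_apply p.1)

theorem isTopologicalBasis_range_boolCylinder :
    IsTopologicalBasis (range (boolCylinder (J := J))) := by
  classical
  refine isTopologicalBasis_of_isOpen_of_nhds
    (forall_mem_range.2 fun F => (isClopen_boolCylinder F).isOpen) fun f U hf hU => ?_
  obtain ⟨s, V, hV, hVU⟩ := isOpen_pi_iff.1 hU f hf
  refine ⟨_, mem_range_self (s.image fun j => (j, f j)), by simp [boolCylinder], fun g hg => ?_⟩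
  refine hVU fun j hj => ?_
  rw [show g j = f j from hg (j, f j) (Finset.mem_image_of_mem _ hj)]
  exact (hV j hj).2

theorem mk_openLindelofSets_cantorCube_le_continuum (hJ : #J ≤ 𝔠) :
    #(openLindelofSets (J → Bool)) ≤ 𝔠 := by
  refine mk_openLindelofSets_le_continuum isTopologicalBasis_range_boolCylinder
    (mk_range_le.trans ?_)
  rcases finite_or_infinite (J × Bool)
  · exact (mk_le_aleph0 (α := Finset (J × Bool))).trans aleph0_le_continuum
  · rw [mk_finset_of_infinite, mk_prod]
    exact mul_le_of_le aleph0_le_continuum (by simpa using hJ)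
      (by simpa using (nat_lt_continuum 2).le)

theorem dependsOn_mem_boolCylinder (F : Finset (J × Bool)) :
    DependsOn (· ∈ boolCylinder F) {j | ∃ p ∈ F, p.1 = j} := fun f g hfg =>
  propext (forall₂_congr fun p hp => by rw [hfg p.1 ⟨p, hp, rfl⟩])

theorem exists_countable_dependsOn {U : Set (J → Bool)} (hU : U ∈ openLindelofSets (J → Bool)) :
    ∃ D : Set J, D.Countable ∧ DependsOn (· ∈ U) D := by
  obtain ⟨𝒱, h𝒱, h𝒱c, rfl⟩ :=
    exists_countable_subset_sUnion_eq isTopologicalBasis_range_boolCylinder hU.1 hU.2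
  choose! F hF using fun V => @h𝒱 V
  refine ⟨⋃ V ∈ 𝒱, {j | ∃ p ∈ F V, p.1 = j},
    h𝒱c.biUnion fun V _ => (F V).countable_toSet.image Prod.fst, fun f g hfg => ?_⟩
  refine propext (exists_congr fun V => and_congr_right fun hV => ?_)
  rw [← hF V hV]
  exact (dependsOn_mem_boolCylinder (F V) fun j hj => hfg j (mem_biUnion hV hj)).to_iff

theorem isGδ_compl_of_mem_openLindelofSets {U : Set (J → Bool)}
    (hU : U ∈ openLindelofSets (J → Bool)) : IsGδ Uᶜ := by
  obtain ⟨𝒱, h𝒱, h𝒱c, rfl⟩ :=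
    exists_countable_subset_sUnion_eq isTopologicalBasis_range_boolCylinder hU.1 hU.2
  rw [compl_sUnion, sInter_image]
  refine IsGδ.biInter_of_isOpen h𝒱c fun V hV => ?_
  obtain ⟨F, rfl⟩ := h𝒱 hV
  exact (isClopen_boolCylinder F).compl.isOpen

end CantorCube

section Filtration

variable {I J : Type u} [LinearOrder I]

/-- An increasing filtration, indexed by the well-order `I`, of the open Lindelöf subsets of the
Cantor cube `J → Bool` by countable families, whose `γ`-th stage only involves the coordinates of
rank less than `γ`. It takes the place of a continuous chain of countable elementary submodels. -/
structure OpenFiltration (ρ : J → I) where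
  stage : I → Set (Set (J → Bool))
  monotone_stage : Monotone stage
  countable_stage : ∀ γ, (stage γ).Countable
  stage_subset : ∀ γ, stage γ ⊆ openLindelofSets (J → Bool)
  dependsOn : ∀ γ, ∀ U ∈ stage γ, DependsOn (· ∈ U) {j | ρ j < γ}
  exists_mem_stage : ∀ U ∈ openLindelofSets (J → Bool), ∃ γ, U ∈ stage γ

variable [IsOmegaOneContinuum I]

theorem nonempty_openFiltration (hJ : #J ≤ 𝔠) (ρ : J → I) : Nonempty (OpenFiltration ρ) := by
  have : Nonempty (openLindelofSets (J → Bool)) := ⟨∅, isOpen_empty, isLindelof_empty⟩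
  obtain ⟨O, hO⟩ := IsOmegaOneContinuum.exists_surjective (I := I)
    (mk_openLindelofSets_cantorCube_le_continuum hJ)
  refine ⟨⟨fun γ => {U | ∃ β < γ, O β = U ∧ DependsOn (· ∈ U) {j | ρ j < γ}}, ?_, ?_, ?_, ?_, ?_⟩⟩
  · rintro γ γ' hγ U ⟨β, hβ, hU, hdep⟩
    exact ⟨β, hβ.trans_le hγ, hU, fun f g hfg => hdep fun j hj => hfg j (hj.trans_le hγ)⟩
  · refine fun γ => ((IsOmegaOneContinuum.countable_Iio γ).image fun β => (O β : Set _)).mono ?_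
    rintro U ⟨β, hβ, rfl, -⟩
    exact mem_image_of_mem _ hβ
  · rintro γ _ ⟨β, -, rfl, -⟩
    exact (O β).2
  · rintro γ U ⟨-, -, -, hdep⟩
    exact hdep
  · intro U hU
    obtain ⟨β, hβ⟩ := hO ⟨U, hU⟩
    obtain ⟨D, hDc, hD⟩ := exists_countable_dependsOn hU
    obtain ⟨γ, hγ⟩ := IsOmegaOneContinuum.exists_forall_lt_of_countable
      ((hDc.image ρ).insert β)
    exact ⟨γ, β, hγ β (mem_insert _ _), by rw [hβ], fun f g hfg => hD fun j hj =>
      hfg j (hγ _ (mem_insert_of_mem _ (mem_image_of_mem ρ hj)))⟩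

end Filtration

-- If the range were not σ-compact, every co-σ-compact set containing its complement `Z` would meet
-- it; a transfinite selection then gives points of the range concentrating on `Z`.
theorem ProductivelyLindelofSp.isSigmaCompact_range {I X M : Type u} [LinearOrder I]
    [IsOmegaOneContinuum I] [TopologicalSpace X] [TopologicalSpace M] [CompactSpace M] [T2Space M]
    [SecondCountableTopology M] (hX : ProductivelyLindelofSp X) {f : X → M} (hf : Continuous f) :
    IsSigmaCompact (range f) := by
  by_contra hnot
  have : Nonempty (openLindelofSets M) := ⟨∅, isOpen_empty, isLindelof_empty⟩
  obtain ⟨O, hO⟩ := IsOmegaOneContinuum.exists_surjective (I := I)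
    (mk_openLindelofSets_le_continuum (isBasis_countableBasis M)
      ((countable_countableBasis M).le_aleph0.trans aleph0_le_continuum))
  have exists_point : ∀ α, ∃ x, ∀ β ≤ α, (range f)ᶜ ⊆ O β → f x ∈ (O β : Set M) := by
    intro α
    by_contra! hα
    have hrange : range f = ⋃ β ∈ {β ∈ Iic α | (range f)ᶜ ⊆ O β}, (O β : Set M)ᶜ := by
      refine subset_antisymm ?_ (iUnion₂_subset fun β hβ => compl_subset_comm.1 hβ.2)
      rintro _ ⟨x, rfl⟩
      obtain ⟨β, hβ, hOβ, hx⟩ := hα x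
      exact mem_biUnion ⟨hβ, hOβ⟩ hx
    refine hnot (hrange ▸ isSigmaCompact_biUnion
      ((IsOmegaOneContinuum.countable_Iic α).mono (sep_subset _ _)) fun β _ => ?_)
    exact (O β).2.1.isClosed_compl.isCompact.isSigmaCompact
  choose x hx using exists_point
  have hconc : Tendsto (f ∘ x) cocountable (𝓝ˢ (range f)ᶜ) := by
    refine (hasBasis_nhdsSet _).tendsto_right_iff.2 fun U ⟨hUo, hU⟩ => ?_
    obtain ⟨β, hβ⟩ := hO ⟨U, hUo, HereditarilyLindelofSpace.isLindelof U⟩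
    filter_upwards [IsOmegaOneContinuum.Ioi_mem_cocountable β] with α hα
    simpa [hβ] using hx α β (le_of_lt hα) (by rwa [hβ])
  obtain ⟨x₀, z, hz, hclos⟩ := hX.exists_mem_closure_range
    (HereditarilyLindelofSpace.isLindelof (range f)ᶜ) hconc x
  have hgraph : f x₀ = z :=
    (isClosed_eq (hf.comp continuous_fst) continuous_snd).closure_subset_iff.2
      (range_subset_iff.2 fun _ => rfl) hclos
  exact hz ⟨x₀, hgraph⟩

/-! ### Null sets of a σ-complete filter -/

/-- `IsGδNull l K` says that `K` has a `Gδ` hull whose complement belongs to the filter `l`.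
Such sets form an ideal, although in general not a σ-ideal. -/
def IsGδNull {X : Type*} [TopologicalSpace X] (l : Filter X) (K : Set X) : Prop :=
  ∃ D, IsGδ D ∧ K ⊆ D ∧ Dᶜ ∈ l

namespace IsGδNull

variable {X : Type*} [TopologicalSpace X] {l : Filter X} {K K' : Set X}

theorem mono (hK : IsGδNull l K) (h : K' ⊆ K) : IsGδNull l K' := by
  obtain ⟨D, hD, hKD, hl⟩ := hK
  exact ⟨D, hD, h.trans hKD, hl⟩

theorem empty : IsGδNull l (∅ : Set X) :=
  ⟨∅, .empty, subset_rfl, by simp⟩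

theorem union (hK : IsGδNull l K) (hK' : IsGδNull l K') : IsGδNull l (K ∪ K') := by
  obtain ⟨D, hD, hKD, hl⟩ := hK
  obtain ⟨D', hD', hKD', hl'⟩ := hK'
  exact ⟨D ∪ D', hD.union hD', union_subset_union hKD hKD', by
    simpa only [compl_union] using inter_mem hl hl'⟩

theorem of_subset_sUnion {𝒰 : Set (Set X)} (hK : IsCompact K) (h𝒰 : ∀ U ∈ 𝒰, IsOpen U)
    (hnull : ∀ U ∈ 𝒰, IsGδNull l (K ∩ U)) (hcover : K ⊆ ⋃₀ 𝒰) : IsGδNull l K := by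
  refine hK.induction_on empty (fun _ _ hst ht => ht.mono hst) (fun _ _ => union) fun x hx => ?_
  obtain ⟨U, hU, hxU⟩ := hcover hx
  exact ⟨K ∩ U, inter_mem_nhdsWithin K ((h𝒰 U hU).mem_nhds hxU), hnull U hU⟩

theorem of_diff_sUnion [CountableInterFilter l] {𝒰 : Set (Set X)} (hK : IsCompact K)
    (h𝒰 : ∀ U ∈ 𝒰, IsOpen U) (hnull : ∀ U ∈ 𝒰, IsGδNull l (K ∩ U))
    (hdiff : IsGδNull l (K \ ⋃₀ 𝒰)) : IsGδNull l K := by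
  obtain ⟨D, hD, hKD, hl⟩ := hdiff
  obtain ⟨O, hO, rfl⟩ := isGδ_iff_eq_iInter_nat.1 hD
  have diff_null : ∀ n, IsGδNull l (K \ O n) := fun n =>
    of_subset_sUnion (hK.diff (hO n)) h𝒰
      (fun U hU => (hnull U hU).mono (inter_subset_inter_left U sdiff_subset))
      fun x hx => by_contra fun hx𝒰 => hx.2 (mem_iInter.1 (hKD ⟨hx.1, hx𝒰⟩) n)
  choose E hE hKE hEl using diff_null
  refine ⟨⋂ n, O n ∪ E n, .iInter fun n => (hO n).isGδ.union (hE n),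
    subset_iInter fun n => sdiff_subset_iff.1 (hKE n), ?_⟩
  filter_upwards [hl, countable_iInter_mem.2 hEl] with x hxO hxE
  obtain ⟨n, hn⟩ := not_forall.1 (mt mem_iInter.2 hxO)
  exact fun hx => (mem_iInter.1 hx n).elim hn (mem_iInter.1 hxE n)

theorem exists_isCompact_subset_forall_inter [CountableInterFilter l] [RegularSpace X]
    (hK : IsCompact K) (hnot : ¬ IsGδNull l K) :
    ∃ K' ⊆ K, IsCompact K' ∧ K'.Nonempty ∧
      ∀ U, IsOpen U → (K' ∩ U).Nonempty → ¬ IsGδNull l (K' ∩ U) := by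
  let 𝒰 : Set (Set X) := {U | IsOpen U ∧ IsGδNull l (K ∩ U)}
  have h𝒰 : ∀ U ∈ 𝒰, IsOpen U := fun U hU => hU.1
  refine ⟨K \ ⋃₀ 𝒰, sdiff_subset, hK.diff (isOpen_sUnion h𝒰), ?_, ?_⟩
  · refine sdiff_nonempty.2 fun hcover => hnot ?_
    exact of_subset_sUnion hK h𝒰 (fun U hU => hU.2) hcover
  · rintro U hU ⟨x, hx, hxU⟩ hnull
    obtain ⟨V, ⟨hxV, hV⟩, hVU⟩ := (hasBasis_opens_closure x).mem_iff.1 (hU.mem_nhds hxU)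
    have closure_null : IsGδNull l (K ∩ closure V) :=
      of_diff_sUnion (hK.inter_right isClosed_closure) h𝒰
        (fun W hW => hW.2.mono (inter_subset_inter_left W inter_subset_left))
        (hnull.mono fun y hy => ⟨⟨hy.1.1, hy.2⟩, hVU hy.1.2⟩)
    exact hx.2 ⟨V, ⟨hV, closure_null.mono (inter_subset_inter_right K subset_closure)⟩, hxV⟩

theorem exists_openLindelofSets {J : Type*} {l : Filter (J → Bool)}
    {K : Set (J → Bool)} (hK : IsClosed K) (hnull : IsGδNull l K) :
    ∃ U ∈ openLindelofSets (J → Bool), U ∈ l ∧ K ⊆ Uᶜ := by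
  obtain ⟨D, hD, hKD, hl⟩ := hnull
  obtain ⟨O, hO, rfl⟩ := isGδ_iff_eq_iInter_nat.1 hD
  choose V hV hKV hVO using fun n =>
    exists_clopen_of_closed_subset_open hK (hO n) (hKD.trans (iInter_subset O n))
  refine ⟨⋃ n, (V n)ᶜ, ⟨isOpen_iUnion fun n => (hV n).compl.isOpen,
    isLindelof_iUnion fun n => (hV n).compl.isClosed.isLindelof⟩, ?_, ?_⟩
  · filter_upwards [hl] with x hx
    rw [← compl_iInter]
    exact fun hxV => hx (iInter_mono hVO hxV)
  · rw [← compl_iInter, compl_compl]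
    exact subset_iInter hKV

end IsGδNull

theorem exists_isOpen_inter_subset_of_subset_sUnion {X : Type*} [TopologicalSpace X] [T2Space X]
    {P : Set X} (hP : IsCompact P) (hne : P.Nonempty) {𝓕 : Set (Set X)} (h𝓕c : 𝓕.Countable)
    (h𝓕 : ∀ F ∈ 𝓕, IsClosed F) (hcover : P ⊆ ⋃₀ 𝓕) :
    ∃ F ∈ 𝓕, ∃ V, IsOpen V ∧ (P ∩ V).Nonempty ∧ P ∩ V ⊆ F := by
  have := isCompact_iff_compactSpace.1 hP
  have := hne.to_subtype
  have := h𝓕c.to_subtype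
  obtain ⟨⟨F, hF⟩, y, hy⟩ := nonempty_interior_of_iUnion_of_closed
    (f := fun F : 𝓕 => ((↑) : P → X) ⁻¹' F) (fun F => (h𝓕 F F.2).preimage continuous_subtype_val)
    (by rw [← preimage_iUnion, ← sUnion_eq_iUnion]; exact preimage_eq_univ_iff.2 (by simpa))
  obtain ⟨W, hWF, hWo, hyW⟩ := mem_interior.1 hy
  obtain ⟨V, hV, rfl⟩ := isOpen_induced_iff.1 hWo
  exact ⟨F, hF, V, hV, ⟨y, y.2, hyW⟩, fun x hx => hWF (show (⟨x, hx.1⟩ : P) ∈ _ from hx.2)⟩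

theorem preimage_domRestrict_boolCylinder {J : Type*} [DecidableEq J] (s : Set J)
    (F : Finset (s × Bool)) :
    s.domRestrict (π := fun _ => Bool) ⁻¹' boolCylinder F =
      boolCylinder (F.image (Prod.map (↑) id)) := by
  ext f
  simp only [boolCylinder, mem_preimage, mem_ofPred_eq, Finset.forall_mem_image]
  rfl

theorem exists_boolCylinder_inter_subset_of_image_domRestrict_subset {J : Type*} {s : Set J}
    {P : Set (J → Bool)} (hP : IsCompact P) (hne : P.Nonempty) {𝓕 : Set (Set (s → Bool))}
    (h𝓕c : 𝓕.Countable) (h𝓕 : ∀ A ∈ 𝓕, IsClosed A) (hcover : s.domRestrict '' P ⊆ ⋃₀ 𝓕) :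
    ∃ A ∈ 𝓕, ∃ F : Finset (J × Bool), (∀ p ∈ F, p.1 ∈ s) ∧ (P ∩ boolCylinder F).Nonempty ∧
      P ∩ boolCylinder F ⊆ s.domRestrict ⁻¹' A := by
  classical
  obtain ⟨A, hA, V, hV, ⟨_, ⟨w, hw, rfl⟩, hwV⟩, hVA⟩ :=
    exists_isOpen_inter_subset_of_subset_sUnion (hP.image (Pi.continuous_domRestrict s))
      (hne.image _) h𝓕c h𝓕 hcover
  obtain ⟨_, ⟨F, rfl⟩, hwF, hFV⟩ :=
    isTopologicalBasis_range_boolCylinder.exists_subset_of_mem_open hwV hV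
  refine ⟨A, hA, F.image (Prod.map (↑) id), ?_, ?_, ?_⟩
  · simp only [Finset.forall_mem_image]
    exact fun p _ => p.1.2
  all_goals rw [← preimage_domRestrict_boolCylinder]
  · exact ⟨w, hw, hwF⟩
  · exact fun v hv => hVA ⟨mem_image_of_mem _ hv.1, hFV hv.2⟩

section Saturation

variable {I : Type u} [LinearOrder I]

/-- The points of the Cantor cube that agree with some point of `X` on all coordinates below `γ`. -/
def saturation (γ : I) (X : Set (I → Bool)) : Set (I → Bool) :=
  {w | ∃ x ∈ X, ∀ ε < γ, x ε = w ε}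

theorem saturation_antitone (X : Set (I → Bool)) : Antitone (saturation · X) := by
  rintro γ γ' hγ w ⟨x, hx, hxw⟩
  exact ⟨x, hx, fun ε hε => hxw ε (hε.trans_le hγ)⟩

theorem exists_notMem_saturation [IsOmegaOneContinuum I] {X : Set (I → Bool)} (hX : IsLindelof X)
    {w : I → Bool} (hw : w ∉ X) : ∃ γ, w ∉ saturation γ X := by
  have hcover : X ⊆ ⋃ i, {x | x i ≠ w i} := fun x hx =>
    mem_iUnion.2 (Function.ne_iff.1 (ne_of_mem_of_not_mem hx hw))
  obtain ⟨t, ht, hXt⟩ := hX.elim_countable_subcover _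
    (fun i => isOpen_ne_fun (continuous_apply i) continuous_const) hcover
  obtain ⟨γ, hγ⟩ := IsOmegaOneContinuum.exists_forall_lt_of_countable ht
  refine ⟨γ, fun ⟨x, hx, hxw⟩ => ?_⟩
  obtain ⟨i, hi, hne⟩ := mem_iUnion₂.1 (hXt hx)
  exact hne (hxw i (hγ i hi))

end Saturation

/-- The points lying in every set of the `γ`-th stage that belongs to the filter `l`. -/
def OpenFiltration.generic {I J : Type u} [LinearOrder I] {ρ : J → I} (𝒪 : OpenFiltration ρ)
    (l : Filter (J → Bool)) (γ : I) : Set (J → Bool) :=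
  ⋂₀ {U ∈ 𝒪.stage γ | U ∈ l}

namespace OpenFiltration

variable {I J : Type u} [LinearOrder I] {ρ : J → I} (𝒪 : OpenFiltration ρ) {l : Filter (J → Bool)}

theorem generic_mem [CountableInterFilter l] (γ : I) : 𝒪.generic l γ ∈ l :=
  (countable_sInter_mem ((𝒪.countable_stage γ).mono (sep_subset _ _))).2 fun _ hU => hU.2

theorem generic_antitone : Antitone (𝒪.generic l) := fun _ _ hγ =>
  sInter_subset_sInter fun _ hU => ⟨𝒪.monotone_stage hγ hU.1, hU.2⟩

end OpenFiltration

section CompactSets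

variable {I : Type u} [LinearOrder I] [IsOmegaOneContinuum I] {X P K : Set (I → Bool)}
  {l : Filter (I → Bool)}

theorem exists_gt_forall_not_subset_saturation (hX : IsLindelof X)
    (hnull : ∀ K ⊆ X, IsCompact K → IsGδNull l K) (hP : IsCompact P)
    (hker : ∀ U, IsOpen U → (P ∩ U).Nonempty → ¬ IsGδNull l (P ∩ U)) (δ : I) :
    ∃ γ > δ, ∀ F, (∀ p ∈ F, p.1 < γ) → (P ∩ boolCylinder F).Nonempty →
      ¬ P ∩ boolCylinder F ⊆ saturation γ X := by
  have exists_not_subset : ∀ F, (P ∩ boolCylinder F).Nonempty →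
      ∃ γ, ¬ P ∩ boolCylinder F ⊆ saturation γ X := by
    intro F hF
    by_contra! hsat
    refine hker _ (isClopen_boolCylinder F).isOpen hF (hnull _ (fun w hw => ?_)
      (hP.inter_right (isClopen_boolCylinder F).isClosed))
    by_contra hwX
    obtain ⟨γ, hγ⟩ := exists_notMem_saturation hX hwX
    exact hγ (hsat γ hw)
  choose! b hb using exists_not_subset
  obtain ⟨γ, hδγ, hbγ⟩ := IsOmegaOneContinuum.exists_gt_forall_lt_of_rank (ρ := Prod.fst)
    (fun i : I => ((IsOmegaOneContinuum.countable_Iic i).prod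
      (countable_univ (α := Bool))).mono fun p hp => mk_mem_prod hp (mem_univ p.2)) b δ
  exact ⟨γ, hδγ, fun F hFγ hF hsub =>
    hb F hF (hsub.trans (saturation_antitone X (hbγ F hFγ).le))⟩

theorem exists_boolCylinder_inter_subset_of_generic_subset_saturation
    (hX : ProductivelyLindelofSp X) (𝒪 : OpenFiltration (id : I → I)) {γ : I} (hP : IsCompact P)
    (hne : P.Nonempty) (hsub : P ∩ 𝒪.generic l γ ⊆ saturation γ X) :
    ∃ F : Finset (I × Bool), (∀ p ∈ F, p.1 < γ) ∧ (P ∩ boolCylinder F).Nonempty ∧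
      (P ∩ boolCylinder F ⊆ saturation γ X ∨
        ∃ U ∈ 𝒪.stage γ, U ∈ l ∧ P ∩ boolCylinder F ⊆ Uᶜ) := by
  have := (IsOmegaOneContinuum.countable_Iio γ).to_subtype
  let r : (I → Bool) → Iio γ → Bool := (Iio γ).domRestrict
  have hr : Continuous r := Pi.continuous_domRestrict _
  obtain ⟨C, hC, hCX⟩ := hX.isSigmaCompact_range (I := I) (hr.comp continuous_subtype_val)
  let 𝓕 := range C ∪ (fun U => r '' (P \ U)) '' {U ∈ 𝒪.stage γ | U ∈ l}
  have h𝓕c : 𝓕.Countable :=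
    (countable_range C).union (((𝒪.countable_stage γ).mono (sep_subset _ _)).image _)
  have h𝓕 : ∀ A ∈ 𝓕, IsClosed A := by
    rintro _ (⟨n, rfl⟩ | ⟨U, hU, rfl⟩)
    · exact (hC n).isClosed
    · exact ((hP.diff (𝒪.stage_subset γ hU.1).1).image hr).isClosed
  have hcover : r '' P ⊆ ⋃₀ 𝓕 := by
    rintro _ ⟨w, hw, rfl⟩
    by_cases hwγ : w ∈ 𝒪.generic l γ
    · obtain ⟨x, hx, hxw⟩ := hsub ⟨hw, hwγ⟩
      have hrw : r w ∈ ⋃ n, C n := hCX ▸ ⟨(⟨x, hx⟩ : X), funext fun ε => hxw ε ε.2⟩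
      obtain ⟨n, hn⟩ := mem_iUnion.1 hrw
      exact ⟨C n, Or.inl ⟨n, rfl⟩, hn⟩
    · obtain ⟨U, hU, hwU⟩ : ∃ U ∈ {U ∈ 𝒪.stage γ | U ∈ l}, w ∉ U := by
        simpa only [OpenFiltration.generic, mem_sInter, not_forall, exists_prop] using hwγ
      exact ⟨_, Or.inr ⟨U, hU, rfl⟩, mem_image_of_mem r ⟨hw, hwU⟩⟩
  obtain ⟨A, hA, F, hFγ, hFne, hFA⟩ :=
    exists_boolCylinder_inter_subset_of_image_domRestrict_subset hP hne h𝓕c h𝓕 hcover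
  refine ⟨F, hFγ, hFne, ?_⟩
  rcases hA with ⟨n, rfl⟩ | ⟨U, hU, rfl⟩
  · refine Or.inl fun w hw => ?_
    obtain ⟨x, hxw⟩ : r w ∈ range fun x : X => r x := hCX ▸ mem_iUnion.2 ⟨n, hFA hw⟩
    exact ⟨x, x.2, fun ε hε => congrFun hxw ⟨ε, hε⟩⟩
  · refine Or.inr ⟨U, hU.1, hU.2, fun w hw hwU => ?_⟩
    obtain ⟨v, hv, hvw⟩ := hFA hw
    exact hv.2 ((𝒪.dependsOn γ U hU.1 fun ε hε => congrFun hvw ⟨ε, hε⟩).to_iff.2 hwU)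

theorem exists_gt_mem_generic_notMem_saturation [CountableInterFilter l]
    (hX : ProductivelyLindelofSp X) (hnull : ∀ K ⊆ X, IsCompact K → IsGδNull l K)
    (𝒪 : OpenFiltration (id : I → I)) (hK : IsCompact K) (hnot : ¬ IsGδNull l K) (δ : I) :
    ∃ γ > δ, ∃ w ∈ K ∩ 𝒪.generic l γ, w ∉ saturation γ X := by
  obtain ⟨P, hPK, hP, hne, hker⟩ := IsGδNull.exists_isCompact_subset_forall_inter hK hnot
  obtain ⟨γ, hδγ, hγ⟩ := exists_gt_forall_not_subset_saturation
    (isLindelof_iff_lindelofSpace.2 hX.lindelofSpace) hnull hP hker δ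
  refine ⟨γ, hδγ, not_subset.1 fun hsub => ?_⟩
  obtain ⟨F, hFγ, hFne, hF⟩ := exists_boolCylinder_inter_subset_of_generic_subset_saturation hX 𝒪
    hP hne ((inter_subset_inter_left _ hPK).trans hsub)
  rcases hF with hF | ⟨U, hU, hUl, hFU⟩
  · exact hγ F hFγ hFne hF
  · exact hker _ (isClopen_boolCylinder F).isOpen hFne
      ⟨Uᶜ, isGδ_compl_of_mem_openLindelofSets (𝒪.stage_subset γ hU), hFU,
        by rwa [compl_compl]⟩

end CompactSets

/-! ### Masked points -/

section Masks

variable {I : Type u}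

/-- The code, in the Cantor cube over `(I × I) × Bool`, of a mask `m` together with those values of
`v` that it lets through: the coordinate `(p, true)` is `m p` and the coordinate `(p, false)` is
`m p && v p.2`. -/
def masked (m : I × I → Bool) (v : I → Bool) : (I × I) × Bool → Bool :=
  fun q => m q.1 && (q.2 || v q.1.2)

theorem continuous_masked_left (v : I → Bool) : Continuous fun m => masked m v :=
  continuous_pi fun q => (continuous_of_discreteTopology (f := (· && (q.2 || v q.1.2)))).comp
    (continuous_apply q.1)

theorem continuous_masked_right (m : I × I → Bool) : Continuous (masked m) :=
  continuous_pi fun q => (continuous_of_discreteTopology (f := fun b => m q.1 && (q.2 || b))).comp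
    (continuous_apply q.1.2)

theorem isClosed_setOf_forall_masked_notMem {O : Set ((I × I) × Bool → Bool)} (hO : IsOpen O)
    (A : Set (I × I → Bool)) : IsClosed {v | ∀ m ∈ A, masked m v ∉ O} := by
  simp only [ofPred_forall]
  exact isClosed_biInter fun m _ => (hO.preimage (continuous_masked_right m)).isClosed_compl

theorem eq_of_mem_closure_range_masked {A : Type*} {X : Set (I → Bool)} {x : A → X} {x₀ : X}
    {M : A → I × I → Bool} {m : I × I → Bool} {w : I → Bool}
    (h : (x₀, masked m w) ∈ closure (range fun α => (x α, masked (M α) (x α))))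
    {p : I × I} (hp : m p = true) : x₀.1 p.2 = w p.2 := by
  have hclosed : IsClosed {y : X × ((I × I) × Bool → Bool) |
      y.2 (p, false) = (y.2 (p, true) && y.1.1 p.2)} := by
    refine isClosed_eq (by fun_prop)
      ((continuous_of_discreteTopology (f := fun b : Bool × Bool => b.1 && b.2)).comp
        (g := fun b : Bool × Bool => b.1 && b.2) (Continuous.prodMk (by fun_prop) ?_))
    exact (continuous_apply p.2).comp (continuous_subtype_val.comp continuous_fst)
  have hmem := hclosed.closure_subset_iff.2 (range_subset_iff.2 fun α => by simp [masked]) h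
  simpa [masked, hp, eq_comm] using hmem

theorem exists_openLindelofSets_forall_masked_mem {l : Filter (I → Bool)}
    {O : Set ((I × I) × Bool → Bool)} (hO : IsOpen O) {A : Set (I × I → Bool)}
    (hnull : IsGδNull l {v | ∀ m ∈ A, masked m v ∉ O}) :
    ∃ U ∈ openLindelofSets (I → Bool), U ∈ l ∧
      ∃ Q ∈ openLindelofSets ((I × I) × Bool → Bool), Q ⊆ O ∧ ∀ v ∈ U, ∃ m ∈ A, masked m v ∈ Q := by
  obtain ⟨U, hU, hUl, hUO⟩ := hnull.exists_openLindelofSets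
    (isClosed_setOf_forall_masked_notMem hO A)
  have exists_box : ∀ v ∈ U, ∃ m ∈ A, ∃ F, masked m v ∈ boolCylinder F ∧ boolCylinder F ⊆ O := by
    intro v hv
    obtain ⟨m, hm, hmO⟩ : ∃ m ∈ A, masked m v ∈ O := by
      by_contra! h
      exact hUO h hv
    obtain ⟨_, ⟨F, rfl⟩, hF⟩ :=
      isTopologicalBasis_range_boolCylinder.exists_subset_of_mem_open hmO hO
    exact ⟨m, hm, F, hF⟩
  choose! m hmA F hmF hFO using exists_box
  obtain ⟨t, ht, htU, hUt⟩ := hU.2.elim_nhds_subcover (fun v => masked (m v) ⁻¹' boolCylinder (F v))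
    fun v hv => ((isClopen_boolCylinder (F v)).isOpen.preimage
      (continuous_masked_right (m v))).mem_nhds (hmF v hv)
  refine ⟨U, hU, hUl, ⋃ v ∈ t, boolCylinder (F v),
    ⟨isOpen_biUnion fun v _ => (isClopen_boolCylinder (F v)).isOpen,
      ht.isLindelof_biUnion fun v _ => (isClopen_boolCylinder (F v)).isClosed.isLindelof⟩,
    iUnion₂_subset fun v hv => hFO v (htU v hv), fun v hv => ?_⟩
  obtain ⟨v', hv', hvF⟩ := mem_iUnion₂.1 (hUt hv)
  exact ⟨m v', hmA v' (htU v' hv'), mem_biUnion hv' hvF⟩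

/-- The rank of a coordinate or of a constraint for masks: the larger of its two indices. -/
def pairRank [LinearOrder I] (q : (I × I) × Bool) : I :=
  max q.1.1 q.1.2

variable [LinearOrder I]

theorem countable_pairRank_le [IsOmegaOneContinuum I] (i : I) :
    {q : (I × I) × Bool | pairRank q ≤ i}.Countable := by
  have hIic := IsOmegaOneContinuum.countable_Iic i
  refine ((hIic.prod hIic).prod (countable_univ (α := Bool))).mono fun q hq => ?_
  exact mk_mem_prod (max_le_iff.1 hq) (mem_univ q.2)

open Classical in
/-- The mask that agrees with `m` on pairs of indices below `γ` and with `m'` elsewhere. -/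
noncomputable def spliceMask (γ : I) (m m' : I × I → Bool) : I × I → Bool :=
  {p : I × I | max p.1 p.2 < γ}.piecewise m m'

variable {γ : I} {m m' : I × I → Bool}

theorem spliceMask_of_lt {p : I × I} (hp : max p.1 p.2 < γ) : spliceMask γ m m' p = m p :=
  piecewise_eq_of_mem _ _ _ hp

theorem spliceMask_of_le {p : I × I} (hp : γ ≤ max p.1 p.2) : spliceMask γ m m' p = m' p :=
  piecewise_eq_of_notMem _ _ _ (not_lt.2 hp)

theorem masked_spliceMask_mem_iff {Q : Set ((I × I) × Bool → Bool)}
    (hQ : DependsOn (· ∈ Q) {q | pairRank q < γ}) (v : I → Bool) :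
    masked (spliceMask γ m m') v ∈ Q ↔ masked m v ∈ Q :=
  (hQ fun q hq => by rw [masked, masked, spliceMask_of_lt hq]).to_iff

end Masks

theorem isLindelof_of_forall_isOpen_superset {X : Type*} [TopologicalSpace X] {s : Set X}
    (h : ∀ O, IsOpen O → s ⊆ O → ∃ L, IsLindelof L ∧ s ⊆ L ∧ L ⊆ O) : IsLindelof s := by
  refine isLindelof_of_countable_subcover fun U hU hsU => ?_
  obtain ⟨L, hL, hsL, hLU⟩ := h _ (isOpen_iUnion hU) hsU
  obtain ⟨t, ht, hLt⟩ := hL.elim_countable_subcover U hU hLU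
  exact ⟨t, ht, hsL.trans hLt⟩

theorem isLindelof_of_forall_notMem_eq_false {J : Type*} {D : Set J} (hD : D.Countable)
    {s : Set (J → Bool)} (hs : ∀ f ∈ s, ∀ j ∉ D, f j = false) : IsLindelof s := by
  classical
  have := hD.to_subtype
  let e : (D → Bool) → J → Bool := fun g j => if hj : j ∈ D then g ⟨j, hj⟩ else false
  have he : Continuous e := continuous_pi fun j => by
    by_cases hj : j ∈ D
    · simpa only [e, dif_pos hj] using continuous_apply _
    · simpa only [e, dif_neg hj] using continuous_const
  have hse : s = e '' (e ⁻¹' s) := (image_preimage_eq_of_subset fun f hf =>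
    ⟨D.domRestrict f, funext fun j => by
      by_cases hj : j ∈ D
      · simp only [e, dif_pos hj, domRestrict_apply]
      · simp only [e, dif_neg hj, hs f hf j hj]⟩).symm
  rw [hse]
  exact (HereditarilyLindelofSpace.isLindelof _).image he

section Alster

variable {I : Type u} [LinearOrder I] (𝒪 : OpenFiltration (id : I → I))
  (𝒬 : OpenFiltration (pairRank (I := I))) (l : Filter (I → Bool)) (X : Set (I → Bool))

/-- The sets of the `γ`-th stage of `𝒬` that contain `masked m v` for a dense set of masks `m`,
whenever `v` is generic at level `γ`. -/
def forcedSets (γ : I) : Set (Set ((I × I) × Bool → Bool)) :=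
  {Q ∈ 𝒬.stage γ | ∀ v ∈ 𝒪.generic l γ, Dense {m | masked m v ∈ Q}}

/-- The codes of generic points outside the `γ`-saturation of `X`, by generic masks that see
all coordinates below `γ` in their `γ`-th row and vanish beyond `γ`. -/
def maskedWitnesses (γ : I) : Set ((I × I) × Bool → Bool) :=
  {z | (∀ Q ∈ forcedSets 𝒪 𝒬 l γ, z ∈ Q) ∧ ∃ m w, z = masked m w ∧ w ∈ 𝒪.generic l γ ∧
    w ∉ saturation γ X ∧ (∀ ε < γ, m (γ, ε) = true) ∧ ∀ p, γ < max p.1 p.2 → m p = false}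

variable {𝒪 𝒬 l X}

theorem exists_mask_forall_forcedSets {γ : I} {v : I → Bool}
    (hv : v ∈ 𝒪.generic l γ) {A : Set (I × I → Bool)} (hA : IsOpen A) (hne : A.Nonempty) :
    ∃ m ∈ A, ∀ Q ∈ forcedSets 𝒪 𝒬 l γ, masked m v ∈ Q := by
  have hdense : Dense (⋂ Q ∈ forcedSets 𝒪 𝒬 l γ, {m | masked m v ∈ Q}) :=
    dense_biInter_of_isOpen
      (fun Q hQ => (𝒬.stage_subset γ hQ.1).1.preimage (continuous_masked_left v))
      ((𝒬.countable_stage γ).mono (sep_subset _ _)) fun Q hQ => hQ.2 v hv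
  obtain ⟨m, hmA, hm⟩ := hdense.inter_open_nonempty A hA hne
  exact ⟨m, hmA, fun Q hQ => mem_iInter₂.1 hm Q hQ⟩

theorem isGδNull_setOf_forall_masked_notMem [IsOmegaOneContinuum I] [CountableInterFilter l]
    (hX : ProductivelyLindelofSp X) (hnull : ∀ K ⊆ X, IsCompact K → IsGδNull l K)
    {O : Set ((I × I) × Bool → Bool)} (hO : IsOpen O)
    (hWO : ⋃ γ, maskedWitnesses 𝒪 𝒬 l X γ ⊆ O) {T : Finset ((I × I) × Bool)}
    (hT : (boolCylinder T).Nonempty) :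
    IsGδNull l {v | ∀ m ∈ boolCylinder T, masked m v ∉ O} := by
  by_contra hnot
  obtain ⟨δ, hδ⟩ := IsOmegaOneContinuum.exists_forall_lt_of_countable
    (T.countable_toSet.image pairRank)
  obtain ⟨γ, hδγ, w, ⟨hwK, hw⟩, hwX⟩ :=
    exists_gt_mem_generic_notMem_saturation hX hnull 𝒪
      (isClosed_setOf_forall_masked_notMem hO _).isCompact hnot δ
  obtain ⟨m, hmT, hm⟩ :=
    exists_mask_forall_forcedSets (𝒬 := 𝒬) hw (isClopen_boolCylinder T).isOpen hT
  let m' := spliceMask γ m fun p => decide (p.1 = γ ∧ p.2 < γ)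
  have hm'T : m' ∈ boolCylinder T := fun p hp =>
    (spliceMask_of_lt ((hδ _ (mem_image_of_mem pairRank hp)).trans hδγ)).trans (hmT p hp)
  refine hwK m' hm'T (hWO (mem_iUnion.2 ⟨γ, fun Q hQ => ?_, m', w, rfl, hw, hwX, ?_, ?_⟩))
  · exact (masked_spliceMask_mem_iff (𝒬.dependsOn γ Q hQ.1) w).2 (hm Q hQ)
  · intro ε hε
    exact (spliceMask_of_le (p := (γ, ε)) (le_max_left γ ε)).trans (decide_eq_true ⟨rfl, hε⟩)
  · intro p hp
    exact (spliceMask_of_le hp.le).trans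
      (decide_eq_false fun h => hp.ne' (by rw [h.1, max_eq_left h.2.le]))

theorem dense_setOf_masked_mem_sUnion {δ : I}
    {Q : Finset ((I × I) × Bool) → Set ((I × I) × Bool → Bool)} {v : I → Bool}
    (hQ : ∀ T, (∀ q ∈ T, pairRank q < δ) → (boolCylinder T).Nonempty →
      DependsOn (· ∈ Q T) {q | pairRank q < δ} ∧ ∃ m ∈ boolCylinder T, masked m v ∈ Q T) :
    Dense {m | masked m v ∈
      ⋃ T ∈ {T | (∀ q ∈ T, pairRank q < δ) ∧ (boolCylinder T).Nonempty}, Q T} := by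
  refine dense_iff_inter_open.2 fun A hA ⟨m₀, hm₀⟩ => ?_
  obtain ⟨_, ⟨T', rfl⟩, hT', hTA⟩ :=
    isTopologicalBasis_range_boolCylinder.exists_subset_of_mem_open hm₀ hA
  let T := T'.filter fun q => pairRank q < δ
  have hTδ : ∀ q ∈ T, pairRank q < δ := fun q hq => (Finset.mem_filter.1 hq).2
  have hTne : (boolCylinder T).Nonempty := ⟨m₀, fun q hq => hT' q (Finset.mem_filter.1 hq).1⟩
  obtain ⟨hdep, m, hm, hmQ⟩ := hQ T hTδ hTne
  refine ⟨spliceMask δ m m₀, hTA fun q hq => ?_,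
    mem_biUnion ⟨hTδ, hTne⟩ ((masked_spliceMask_mem_iff hdep v).2 hmQ)⟩
  rcases lt_or_ge (pairRank q) δ with hqδ | hqδ
  · exact (spliceMask_of_lt hqδ).trans (hm q (Finset.mem_filter.2 ⟨hq, hqδ⟩))
  · exact (spliceMask_of_le hqδ).trans (hT' q hq)

theorem exists_openLindelofSets_forall_mem_forcedSets [IsOmegaOneContinuum I]
    {O : Set ((I × I) × Bool → Bool)} (hO : IsOpen O)
    (hnull : ∀ T, (boolCylinder T).Nonempty →
      IsGδNull l {v | ∀ m ∈ boolCylinder T, masked m v ∉ O}) :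
    ∃ Q ∈ openLindelofSets ((I × I) × Bool → Bool), Q ⊆ O ∧
      ∃ γ₀, ∀ γ ≥ γ₀, Q ∈ forcedSets 𝒪 𝒬 l γ := by
  have exists_stage : ∀ T, (boolCylinder T).Nonempty → ∃ U Q, U ∈ l ∧ Q ⊆ O ∧
      (∀ v ∈ U, ∃ m ∈ boolCylinder T, masked m v ∈ Q) ∧
      Q ∈ openLindelofSets ((I × I) × Bool → Bool) ∧ ∃ β, U ∈ 𝒪.stage β ∧ Q ∈ 𝒬.stage β := by
    intro T hT
    obtain ⟨U, hU, hUl, Q, hQ, hQO, hUQ⟩ :=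
      exists_openLindelofSets_forall_masked_mem hO (hnull T hT)
    obtain ⟨β, hβ⟩ := 𝒪.exists_mem_stage U hU
    obtain ⟨β', hβ'⟩ := 𝒬.exists_mem_stage Q hQ
    exact ⟨U, Q, hUl, hQO, hUQ, hQ, max β β', 𝒪.monotone_stage (le_max_left β β') hβ,
      𝒬.monotone_stage (le_max_right β β') hβ'⟩
  choose! U Q hUl hQO hUQ hQ β hUβ hQβ using exists_stage
  obtain ⟨δ₀⟩ : Nonempty I := inferInstance
  obtain ⟨δ, -, hδ⟩ :=
    IsOmegaOneContinuum.exists_gt_forall_lt_of_rank countable_pairRank_le β δ₀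
  let 𝒯 : Set (Finset ((I × I) × Bool)) :=
    {T | (∀ q ∈ T, pairRank q < δ) ∧ (boolCylinder T).Nonempty}
  have h𝒯 : 𝒯.Countable := (countable_finset_forall_mem
    ((countable_pairRank_le δ).mono fun q hq => le_of_lt hq)).mono (sep_subset _ _)
  have hQ𝒯 : ⋃ T ∈ 𝒯, Q T ∈ openLindelofSets ((I × I) × Bool → Bool) :=
    ⟨isOpen_biUnion fun T hT => (hQ T hT.2).1, h𝒯.isLindelof_biUnion fun T hT => (hQ T hT.2).2⟩
  obtain ⟨γ₁, hγ₁⟩ := 𝒬.exists_mem_stage _ hQ𝒯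
  refine ⟨⋃ T ∈ 𝒯, Q T, hQ𝒯, iUnion₂_subset fun T hT => hQO T hT.2, max γ₁ δ, fun γ hγ =>
    ⟨𝒬.monotone_stage ((le_max_left _ _).trans hγ) hγ₁, fun v hv => ?_⟩⟩
  refine dense_setOf_masked_mem_sUnion fun T hTδ hT => ⟨?_, hUQ T hT v ?_⟩
  · exact 𝒬.dependsOn δ _ (𝒬.monotone_stage (hδ T hTδ).le (hQβ T hT))
  · exact 𝒪.generic_antitone ((le_max_right _ _).trans hγ) hv (U T)
      ⟨𝒪.monotone_stage (hδ T hTδ).le (hUβ T hT), hUl T hT⟩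

theorem isLindelof_iUnion_maskedWitnesses [IsOmegaOneContinuum I]
    (hforced : ∀ O, IsOpen O → ⋃ γ, maskedWitnesses 𝒪 𝒬 l X γ ⊆ O →
      ∃ Q ∈ openLindelofSets ((I × I) × Bool → Bool), Q ⊆ O ∧
        ∃ γ₀, ∀ γ ≥ γ₀, Q ∈ forcedSets 𝒪 𝒬 l γ) :
    IsLindelof (⋃ γ, maskedWitnesses 𝒪 𝒬 l X γ) := by
  refine isLindelof_of_forall_isOpen_superset fun O hO hWO => ?_
  obtain ⟨Q, hQ, hQO, γ₀, hγ₀⟩ := hforced O hO hWO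
  have hlow : IsLindelof (⋃ γ ∈ Iic γ₀, maskedWitnesses 𝒪 𝒬 l X γ) := by
    refine isLindelof_of_forall_notMem_eq_false (countable_pairRank_le γ₀) fun z hz q hq => ?_
    obtain ⟨γ, hγ, -, m, w, rfl, -, -, -, hm⟩ := mem_iUnion₂.1 hz
    rw [masked, hm q.1 (lt_of_le_of_lt hγ (not_le.1 hq)), Bool.false_and]
  refine ⟨_, hlow.union hQ.2, iUnion_subset fun γ => ?_,
    union_subset ((iUnion₂_subset_iUnion _ _).trans hWO) hQO⟩
  rcases le_total γ γ₀ with hγ | hγ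
  · exact (subset_biUnion_of_mem (s := Iic γ₀) (u := maskedWitnesses 𝒪 𝒬 l X) hγ).trans
      subset_union_left
  · exact fun z hz => Or.inr (hz.1 Q (hγ₀ γ hγ))

-- If `Xᶜ ∉ l`, there are points of `X` generic at every level. Masked by generic masks, they
-- concentrate on the Lindelöf set of witnesses, which is impossible for a productively Lindelöf
-- `X` because the masks keep the witnesses away from the points of `X`.
theorem compl_mem_of_forall_isCompact_isGδNull [IsOmegaOneContinuum I] [CountableInterFilter l]
    (hX : ProductivelyLindelofSp X) (hnull : ∀ K ⊆ X, IsCompact K → IsGδNull l K) : Xᶜ ∈ l := by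
  obtain ⟨𝒪⟩ := nonempty_openFiltration (IsOmegaOneContinuum.mk_eq_continuum (I := I)).le id
  have mk_pairs_le : #((I × I) × Bool) ≤ 𝔠 := by
    simp [IsOmegaOneContinuum.mk_eq_continuum]
  obtain ⟨𝒬⟩ := nonempty_openFiltration mk_pairs_le pairRank
  have hforced : ∀ O, IsOpen O → ⋃ γ, maskedWitnesses 𝒪 𝒬 l X γ ⊆ O →
      ∃ Q ∈ openLindelofSets ((I × I) × Bool → Bool), Q ⊆ O ∧
        ∃ γ₀, ∀ γ ≥ γ₀, Q ∈ forcedSets 𝒪 𝒬 l γ := fun O hO hWO =>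
    exists_openLindelofSets_forall_mem_forcedSets hO fun T hT =>
      isGδNull_setOf_forall_masked_notMem hX hnull hO hWO hT
  by_contra hXl
  have exists_generic : ∀ α, ∃ x : X, x.1 ∈ 𝒪.generic l α := by
    intro α
    by_contra! hα
    exact hXl (mem_of_superset (𝒪.generic_mem α) fun v hv hvX => hα ⟨v, hvX⟩ hv)
  choose x hx using exists_generic
  choose M _ hM using fun α =>
    exists_mask_forall_forcedSets (𝒬 := 𝒬) (hx α) isOpen_univ univ_nonempty
  have htendsto : Tendsto (fun α => masked (M α) (x α)) cocountable
      (𝓝ˢ (⋃ γ, maskedWitnesses 𝒪 𝒬 l X γ)) := by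
    refine (hasBasis_nhdsSet _).tendsto_right_iff.2 fun O ⟨hO, hWO⟩ => ?_
    obtain ⟨Q, -, hQO, γ₀, hγ₀⟩ := hforced O hO hWO
    filter_upwards [IsOmegaOneContinuum.Ioi_mem_cocountable γ₀] with α hα
    exact hQO (hM α Q (hγ₀ α (le_of_lt hα)))
  obtain ⟨x₀, z, hz, hclos⟩ := hX.exists_mem_closure_range
    (isLindelof_iUnion_maskedWitnesses hforced) htendsto x
  obtain ⟨γ, -, m, w, rfl, -, hwX, hm, -⟩ := mem_iUnion.1 hz
  exact hwX ⟨x₀, x₀.2, fun ε hε => eq_of_mem_closure_range_masked hclos (hm ε hε)⟩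

end Alster

/-! ### The Alster property -/

/-- A space has the Alster property if every family of `Gδ` sets that covers each compact set by a
single member contains a countable cover of the space. -/
def AlsterSpace (X : Type*) [TopologicalSpace X] : Prop :=
  ∀ 𝒢 : Set (Set X), (∀ G ∈ 𝒢, IsGδ G) → (∀ K, IsCompact K → ∃ G ∈ 𝒢, K ⊆ G) →
    ∃ 𝒱 ⊆ 𝒢, 𝒱.Countable ∧ ⋃₀ 𝒱 = Set.univ

/-- The filter of sets whose complement is covered by countably many members of `𝒢`. -/
def coCountablyCovered {X : Type*} (𝒢 : Set (Set X)) : Filter X :=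
  ofCountableUnion {S | ∃ 𝒱 ⊆ 𝒢, 𝒱.Countable ∧ S ⊆ ⋃₀ 𝒱}
    (fun S hS h => by
      choose! 𝒱 h𝒱 h𝒱c hcover using h
      exact ⟨⋃ s ∈ S, 𝒱 s, iUnion₂_subset h𝒱, hS.biUnion h𝒱c, sUnion_subset fun s hs =>
        (hcover s hs).trans (sUnion_subset_sUnion (subset_biUnion_of_mem hs))⟩)
    fun _ ⟨𝒱, h𝒱, h𝒱c, hcover⟩ _ hst => ⟨𝒱, h𝒱, h𝒱c, hst.trans hcover⟩

instance countableInterFilter_coCountablyCovered {X : Type*} (𝒢 : Set (Set X)) :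
    CountableInterFilter (coCountablyCovered 𝒢) :=
  countableInter_ofCountableUnion _ _ _

theorem compl_mem_coCountablyCovered {X : Type*} {𝒢 : Set (Set X)} {G : Set X} (hG : G ∈ 𝒢) :
    Gᶜ ∈ coCountablyCovered 𝒢 :=
  mem_ofCountableUnion.2 ⟨{G}, singleton_subset_iff.2 hG, countable_singleton G, by simp⟩

section AlsterSpace

variable {X Y : Type*} [TopologicalSpace X] [TopologicalSpace Y]

theorem alsterSpace_iff_forall_isGδNull : AlsterSpace X ↔
    ∀ (l : Filter X) [CountableInterFilter l], (∀ K, IsCompact K → IsGδNull l K) → l = ⊥ := by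
  constructor
  · intro hX l _ hnull
    obtain ⟨𝒱, h𝒱, h𝒱c, hcover⟩ := hX {G | IsGδ G ∧ Gᶜ ∈ l} (fun G hG => hG.1) fun K hK =>
      let ⟨D, hD, hKD, hDl⟩ := hnull K hK
      ⟨D, ⟨hD, hDl⟩, hKD⟩
    have hmem : ⋂ G ∈ 𝒱, Gᶜ ∈ l := (countable_bInter_mem h𝒱c).2 fun G hG => (h𝒱 hG).2
    rwa [← compl_iUnion₂, ← sUnion_eq_biUnion, hcover, compl_univ, empty_mem_iff_bot] at hmem
  · intro hX 𝒢 h𝒢 hK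
    have hbot : (∅ : Set X) ∈ coCountablyCovered 𝒢 := empty_mem_iff_bot.2 <| hX _ fun K hKc =>
      let ⟨G, hG, hKG⟩ := hK K hKc
      ⟨G, h𝒢 G hG, hKG, compl_mem_coCountablyCovered hG⟩
    obtain ⟨𝒱, h𝒱, h𝒱c, hcover⟩ := mem_ofCountableUnion.1 hbot
    exact ⟨𝒱, h𝒱, h𝒱c, univ_subset_iff.1 (compl_empty.superset.trans hcover)⟩

theorem IsGδNull.comap {l : Filter Y} {f : X → Y} (hf : Continuous f) {K : Set X}
    (h : IsGδNull l (f '' K)) : IsGδNull (comap f l) K := by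
  obtain ⟨D, hD, hKD, hl⟩ := h
  exact ⟨f ⁻¹' D, hD.preimage hf, image_subset_iff.1 hKD, preimage_mem_comap hl⟩

theorem IsGδNull.map {l : Filter X} {f : X → Y} (hf : IsInducing f) {K : Set X}
    (h : IsGδNull l K) : IsGδNull (map f l) (f '' K) := by
  obtain ⟨D, hD, hKD, hl⟩ := h
  obtain ⟨O, hO, rfl⟩ := isGδ_iff_eq_iInter_nat.1 hD
  choose V hV hVO using fun n => hf.isOpen_iff.1 (hO n)
  obtain rfl : (fun n => f ⁻¹' V n) = O := funext hVO
  rw [← preimage_iInter] at hKD hl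
  exact ⟨⋂ n, V n, .iInter_of_isOpen hV, image_subset_iff.2 hKD, hl⟩

theorem AlsterSpace.of_continuous_surjective (hX : AlsterSpace X) {f : X → Y} (hf : Continuous f)
    (hfs : Function.Surjective f) : AlsterSpace Y := by
  rw [alsterSpace_iff_forall_isGδNull] at hX ⊢
  intro l _ hnull
  rw [← map_comap_of_surjective hfs l,
    hX (Filter.comap f l) fun K hK => (hnull _ (hK.image hf)).comap hf, map_bot]

end AlsterSpace

section Codes

variable {I : Type u} [LinearOrder I] [IsOmegaOneContinuum I]

theorem ProductivelyLindelofSp.alsterSpace_of_subset_cantorCube {X : Set (I → Bool)}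
    (hX : ProductivelyLindelofSp X) : AlsterSpace X := by
  refine alsterSpace_iff_forall_isGδNull.2 fun l _ hnull => ?_
  have hmem : Xᶜ ∈ map Subtype.val l := by
    refine compl_mem_of_forall_isCompact_isGδNull hX fun K hKX hK => ?_
    have hK' := IsInducing.subtypeVal.isCompact_preimage_iff (by simpa using hKX) |>.2 hK
    simpa only [Subtype.image_preimage_coe, inter_eq_right.2 hKX] using
      (hnull _ hK').map .subtypeVal
  rwa [mem_map, preimage_compl, Subtype.coe_preimage_self, compl_univ, empty_mem_iff_bot] at hmem

/-- The relation between the points `x` of a space and their codes `c` in the Cantor cube, for a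
base `U` of a regular space. The `i`-th bit of a code tells `x ∈ closure (U i)` from `x ∉ U i`; both
are possible on the boundary, and allowing both makes the relation closed. -/
def codeRel {ι X : Type*} [TopologicalSpace X] (U : ι → Set X) : Set (X × (ι → Bool)) :=
  {p | ∀ i, (p.2 i = true → p.1 ∈ closure (U i)) ∧ (p.1 ∈ U i → p.2 i = true)}

variable {ι X : Type*} [TopologicalSpace X] {U : ι → Set X}

theorem isClosed_codeRel (hU : ∀ i, IsOpen (U i)) : IsClosed (codeRel U) := by
  have isClopen_bit : ∀ i, IsClopen {p : X × (ι → Bool) | p.2 i = true} := fun i =>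
    (isClopen_discrete {true}).preimage (f := fun p : X × (ι → Bool) => p.2 i) (by fun_prop)
  simp only [codeRel, ofPred_forall, ofPred_and]
  exact isClosed_iInter fun i =>
    (isClosed_imp (isClopen_bit i).isOpen (isClosed_closure.preimage continuous_fst)).inter
      (isClosed_imp ((hU i).preimage continuous_fst) (isClopen_bit i).isClosed)

theorem mem_codeRel_decide (x : X) [∀ i, Decidable (x ∈ U i)] :
    (x, fun i => decide (x ∈ U i)) ∈ codeRel U :=
  fun _ => ⟨fun h => subset_closure (of_decide_eq_true h), decide_eq_true⟩

theorem exists_mem_codeRel_forall_imp_mem [RegularSpace X] (hU : IsTopologicalBasis (range U))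
    {p : X × (ι → Bool)} (hp : p ∈ codeRel U) {W : Set X} (hW : IsOpen W) (hpW : p.1 ∈ W) :
    ∃ i, p.2 i = true ∧ ∀ q ∈ codeRel U, q.2 i = true → q.1 ∈ W := by
  obtain ⟨V, hV, hVc, hVW⟩ := exists_mem_nhds_isClosed_subset (hW.mem_nhds hpW)
  obtain ⟨_, ⟨i, rfl⟩, hi, hiV⟩ := hU.mem_nhds_iff.1 hV
  exact ⟨i, (hp i).2 hi, fun q hq hqi => hVW (closure_minimal hiV hVc ((hq i).1 hqi))⟩

theorem exists_continuous_surjective_codes [T3Space X] (hU : IsTopologicalBasis (range U)) :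
    ∃ φ : Prod.snd '' codeRel U → X, Continuous φ ∧ Function.Surjective φ := by
  classical
  choose p hp hpc using fun c : Prod.snd '' codeRel U => c.2
  refine ⟨fun c => (p c).1, continuous_iff_continuousAt.2 fun c => ?_, fun x => ?_⟩
  · refine tendsto_nhds.2 fun W hW hcW => ?_
    obtain ⟨i, hi, hiW⟩ := exists_mem_codeRel_forall_imp_mem hU (hp c) hW hcW
    have hopen : IsOpen {c : Prod.snd '' codeRel U | c.1 i = true} :=
      (isOpen_discrete {true}).preimage (f := fun c : Prod.snd '' codeRel U => c.1 i)
        ((continuous_apply i).comp continuous_subtype_val)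
    filter_upwards [hopen.mem_nhds ((congrFun (hpc c) i).symm.trans hi)] with c' hc'
    exact hiW (p c') (hp c') ((congrFun (hpc c') i).trans hc')
  · let c : Prod.snd '' codeRel U := ⟨_, mem_image_of_mem Prod.snd (mem_codeRel_decide x)⟩
    refine ⟨c, by_contra fun hne => ?_⟩
    obtain ⟨i, hi, hix⟩ :=
      exists_mem_codeRel_forall_imp_mem hU (hp c) (isOpen_compl_singleton (x := x)) hne
    exact hix (x, c.1) (mem_codeRel_decide x) ((congrFun (hpc c) i).symm.trans hi) rfl

theorem ProductivelyLindelofSp.alsterSpace {X : Type u} [TopologicalSpace X] (I : Type u)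
    [LinearOrder I] [IsOmegaOneContinuum I] (hX : ProductivelyLindelofSp X)
    (hw : WeightLE X 𝔠) : AlsterSpace X := by
  have := hX.t3Space
  obtain ⟨B, hB, hBc⟩ := hw
  have : Nonempty (insert ∅ B : Set (Set X)) := ⟨⟨∅, mem_insert ∅ B⟩⟩
  obtain ⟨e, he⟩ := IsOmegaOneContinuum.exists_surjective (I := I)
    (mk_insert_le_continuum (a := ∅) hBc)
  let U : I → Set X := fun i => e i
  have hU : IsTopologicalBasis (range U) := by
    convert hB.insert_empty
    rw [range_comp' Subtype.val e, he.range_eq, image_univ, Subtype.range_coe]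
  have hcodes : ProductivelyLindelofSp (codeRel U) := hX.prod_of_compactSpace.of_isClosedEmbedding
    (isClosed_codeRel fun i => hU.isOpen (mem_range_self i)).isClosedEmbedding_subtypeVal
  have himage : ProductivelyLindelofSp (Prod.snd '' codeRel U) := hcodes.of_continuous_surjective
    (continuous_snd.continuousOn.mapsToRestrict (mapsTo_image Prod.snd (codeRel U)))
    (surjective_mapsTo_image_restrict Prod.snd (codeRel U))
  obtain ⟨φ, hφ, hφs⟩ := exists_continuous_surjective_codes hU
  exact himage.alsterSpace_of_subset_cantorCube.of_continuous_surjective hφ hφs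

end Codes

/-! ### Countable powers of Alster spaces -/

section CountablePower

variable {X : Type*} [TopologicalSpace X]

theorem exists_ultrafilter_le_nhds_of_le_nhdsSet {K : Set X} (hK : IsCompact K)
    {𝒲 : Ultrafilter X} (h : ↑𝒲 ≤ 𝓝ˢ K) : ∃ x ∈ K, ↑𝒲 ≤ 𝓝 x := by
  by_contra! hno
  have exists_nhd : ∀ x ∈ K, ∃ U, IsOpen U ∧ x ∈ U ∧ U ∉ 𝒲 := by
    intro x hx
    obtain ⟨U, hU, hU𝒲⟩ := Filter.not_le.1 (hno x hx)
    obtain ⟨V, hVU, hV, hxV⟩ := mem_nhds_iff.1 hU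
    exact ⟨V, hV, hxV, fun hV𝒲 => hU𝒲 (mem_of_superset hV𝒲 hVU)⟩
  choose! U hU hxU hU𝒲 using exists_nhd
  obtain ⟨t, ht, hKt⟩ := hK.elim_nhds_subcover U fun x hx => (hU x hx).mem_nhds (hxU x hx)
  have hmem : ⋃ x ∈ t, U x ∈ 𝒲 :=
    h ((isOpen_biUnion fun x hx => hU x (ht x hx)).mem_nhdsSet.2 hKt)
  obtain ⟨x, hx, hx𝒲⟩ := (Ultrafilter.finite_biUnion_mem_iff t.finite_toSet).1 hmem
  exact hU𝒲 x (ht x hx) hx𝒲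

/-- The filter of sets that contain a `Gδ` set around `K`. -/
def gδNhdsSet (K : Set X) : Filter X :=
  countableGenerate {U | IsOpen U ∧ K ⊆ U}

instance countableInterFilter_gδNhdsSet (K : Set X) : CountableInterFilter (gδNhdsSet K) :=
  inferInstanceAs (CountableInterFilter (countableGenerate _))

theorem gδNhdsSet_le_nhdsSet (K : Set X) : gδNhdsSet K ≤ 𝓝ˢ K :=
  (hasBasis_nhdsSet K).ge_iff.2 fun U hU =>
    mem_countableGenerate_iff.2 ⟨{U}, singleton_subset_iff.2 hU, countable_singleton U, by simp⟩

theorem isGδNull_of_disjoint {l : Filter X} {K : Set X} (h : Disjoint l (gδNhdsSet K)) :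
    IsGδNull l K := by
  obtain ⟨S, hS, T, hT, hST⟩ := Filter.disjoint_iff.1 h
  obtain ⟨𝒰, h𝒰, h𝒰c, h𝒰T⟩ := mem_countableGenerate_iff.1 hT
  refine ⟨⋂₀ 𝒰, ⟨𝒰, fun U hU => (h𝒰 hU).1, h𝒰c, rfl⟩,
    subset_sInter fun U hU => (h𝒰 hU).2, mem_of_superset hS ?_⟩
  exact subset_compl_iff_disjoint_right.2 (hST.mono_right h𝒰T)

theorem AlsterSpace.exists_isCompact_neBot (hX : AlsterSpace X) (l : Filter X) [NeBot l]
    [CountableInterFilter l] : ∃ K, IsCompact K ∧ NeBot (l ⊓ gδNhdsSet K) := by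
  by_contra! h
  refine NeBot.ne ‹NeBot l› (alsterSpace_iff_forall_isGδNull.1 hX l fun K hK => ?_)
  exact isGδNull_of_disjoint (disjoint_iff.2 (h K hK))

theorem AlsterSpace.exists_seq_isCompact_neBot (hX : AlsterSpace X) (l : Filter (ℕ → X)) [NeBot l]
    [CountableInterFilter l] : ∃ K : ℕ → Set X, (∀ n, IsCompact (K n)) ∧
      NeBot (l ⊓ Filter.pi fun n => 𝓝ˢ (K n)) := by
  have exists_next : ∀ n (L : Filter (ℕ → X)), NeBot L ∧ CountableInterFilter L →
      ∃ K, IsCompact K ∧ NeBot (L ⊓ comap (Function.eval n) (gδNhdsSet K)) := by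
    rintro n L ⟨_, _⟩
    obtain ⟨K, hK, hne⟩ := hX.exists_isCompact_neBot (map (Function.eval n) L)
    exact ⟨K, hK, map_neBot_iff _ |>.1 <| by rwa [Filter.push_pull]⟩
  choose! K hK hne using exists_next
  let L : ℕ → Filter (ℕ → X) := fun n =>
    n.rec l fun n L => L ⊓ comap (Function.eval n) (gδNhdsSet (K n L))
  have hL : ∀ n, NeBot (L n) ∧ CountableInterFilter (L n) := by
    intro n
    induction n with
    | zero => exact ⟨‹_›, ‹_›⟩
    | succ n ih =>
      have := ih.2
      exact ⟨hne n (L n) ih, countableInterFilter_inf _ _⟩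
  have hanti : Antitone L := antitone_nat_of_succ_le fun n => inf_le_left
  have := fun n => (hL n).1
  refine ⟨fun n => K n (L n), fun n => hK n (L n) (hL n),
    (iInf_neBot_of_directed' hanti.directed_ge this).mono (le_inf (iInf_le L 0) ?_)⟩
  refine le_iInf fun n => (iInf_le L (n + 1)).trans (inf_le_right.trans ?_)
  exact comap_mono (gδNhdsSet_le_nhdsSet _)

theorem AlsterSpace.lindelofSpace_pi_nat (hX : AlsterSpace X) : LindelofSpace (ℕ → X) := by
  refine isLindelof_univ_iff.1 fun l _ _ _ => ?_
  obtain ⟨K, hK, _⟩ := hX.exists_seq_isCompact_neBot l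
  let 𝒲 := Ultrafilter.of (l ⊓ Filter.pi fun n => 𝓝ˢ (K n))
  have h𝒲 : ↑𝒲 ≤ l ⊓ Filter.pi fun n => 𝓝ˢ (K n) := Ultrafilter.of_le _
  have h𝒲K : ∀ n, ((𝒲.map fun f : ℕ → X => f n : Ultrafilter X) : Filter X) ≤ 𝓝ˢ (K n) :=
    le_pi.1 (h𝒲.trans inf_le_right)
  choose x _ hx using fun n => exists_ultrafilter_le_nhds_of_le_nhdsSet (hK n) (h𝒲K n)
  have h𝒲x : ↑𝒲 ≤ 𝓝 x := nhds_pi.ge.trans' (le_pi.2 hx)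
  exact ⟨x, mem_univ x, (ClusterPt.of_le_nhds h𝒲x).mono (h𝒲.trans inf_le_left)⟩

end CountablePower

/-! ### Point-𝔠 bases -/

theorem exists_superset_of_countable_subset (I : Type v) [LinearOrder I] [IsOmegaOneContinuum I]
    {α : Type u} {Φ : Set α → Set α} (hΦ : ∀ C, C.Countable → #(Φ C) ≤ 𝔠) :
    ∃ Y : Set α, #Y ≤ 𝔠 ∧ ∀ C ⊆ Y, C.Countable → Φ C ⊆ Y := by
  let step : ∀ γ : I, (∀ β, β < γ → Set α) → Set α := fun γ Y =>
    ⋃ C ∈ {C | C ⊆ ⋃ (β) (hβ : β < γ), Y β hβ ∧ C.Countable}, Φ C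
  let Y : I → Set α := (wellFounded_lt (α := I)).fix step
  have hY : ∀ γ, Y γ = ⋃ C ∈ {C | C ⊆ ⋃ β ∈ Iio γ, Y β ∧ C.Countable}, Φ C :=
    (wellFounded_lt (α := I)).fix_eq step
  have mk_Y_le : ∀ γ, #(Y γ) ≤ 𝔠 := by
    intro γ
    induction γ using WellFoundedLT.induction with
    | ind γ ih =>
      rw [hY γ]
      have mk_iUnion_Y_le := mk_biUnion_le_continuum
        (mk_le_continuum_of_countable (IsOmegaOneContinuum.countable_Iio γ)) ih
      exact mk_biUnion_le_continuum (mk_countable_subsets_le_continuum mk_iUnion_Y_le)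
        fun C hC => hΦ C hC.2
  refine ⟨⋃ γ, Y γ, mk_iUnion_le_continuum IsOmegaOneContinuum.mk_eq_continuum.le mk_Y_le,
    fun C hC hCc => ?_⟩
  have exists_rank : ∀ c ∈ C, ∃ γ, c ∈ Y γ := fun c hc => mem_iUnion.1 (hC hc)
  choose! rank hrank using exists_rank
  obtain ⟨γ, hγ⟩ := IsOmegaOneContinuum.exists_forall_lt_of_countable (hCc.image rank)
  refine subset_iUnion_of_subset γ ?_
  rw [hY γ]
  exact subset_biUnion_of_mem (u := Φ)
    ⟨fun c hc => mem_biUnion (hγ _ (mem_image_of_mem rank hc)) (hrank c hc), hCc⟩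

namespace PointLE

variable {Z : Type u} {𝒲 𝒲' : Set (Set Z)}

theorem mono {κ : Cardinal.{u}} (h : PointLE 𝒲 κ) (hsub : 𝒲' ⊆ 𝒲) : PointLE 𝒲' κ :=
  fun z => (mk_le_mk_of_subset (inter_subset_inter_left _ hsub)).trans (h z)

theorem mk_inter_nonempty_le_continuum (h : PointLE 𝒲 𝔠) {Y : Set Z} (hY : #Y ≤ 𝔠) :
    #{W ∈ 𝒲 | (W ∩ Y).Nonempty} ≤ 𝔠 :=
  calc #{W ∈ 𝒲 | (W ∩ Y).Nonempty}
    _ ≤ #(⋃ y ∈ Y, {W ∈ 𝒲 | y ∈ W}) := mk_le_mk_of_subset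
      fun _ ⟨hW, _, hyW, hyY⟩ => mem_biUnion hyY ⟨hW, hyW⟩
    _ ≤ 𝔠 := mk_biUnion_le_continuum hY fun y _ => h y

theorem sInter_finite (h : PointLE 𝒲 𝔠) :
    PointLE (sInter '' {t | t.Finite ∧ t ⊆ 𝒲}) 𝔠 := by
  intro z
  have hsub : {W ∈ sInter '' {t | t.Finite ∧ t ⊆ 𝒲} | z ∈ W} ⊆
      sInter '' {t | t ⊆ {W ∈ 𝒲 | z ∈ W} ∧ t.Countable} := by
    rintro _ ⟨⟨t, ⟨htf, ht⟩, rfl⟩, hz⟩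
    exact mem_image_of_mem _ ⟨fun W hW => ⟨ht hW, hz W hW⟩, htf.countable⟩
  exact (mk_le_mk_of_subset hsub).trans <|
    mk_image_le.trans <| mk_countable_subsets_le_continuum (h z)

theorem iUnion_preimage_eval (h : PointLE 𝒲 𝔠) :
    PointLE (⋃ n : ℕ, preimage (Function.eval n) '' 𝒲 : Set (Set (ℕ → Z))) 𝔠 := by
  intro f
  have hsub : {S ∈ ⋃ n : ℕ, preimage (Function.eval n) '' 𝒲 | f ∈ S} ⊆
      ⋃ n : ℕ, preimage (Function.eval n) '' {W ∈ 𝒲 | f n ∈ W} := by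
    rintro _ ⟨hS, hf⟩
    obtain ⟨n, W, hW, rfl⟩ := mem_iUnion.1 hS
    exact mem_iUnion_of_mem n (mem_image_of_mem _ ⟨hW, hf⟩)
  exact (mk_le_mk_of_subset hsub).trans <| mk_iUnion_le_continuum (by simp [aleph0_le_continuum])
    fun n => mk_image_le.trans (h (f n))

end PointLE

section PointContinuumBase

variable {X : Type u} [TopologicalSpace X] {B : Set (Set X)}

theorem exists_isTopologicalBasis_pi_nat_pointLE (hB : IsTopologicalBasis B) (hBp : PointLE B 𝔠) :
    ∃ B' : Set (Set (ℕ → X)), IsTopologicalBasis B' ∧ PointLE B' 𝔠 := by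
  refine ⟨_, isTopologicalBasis_of_subbasis ?_, hBp.iUnion_preimage_eval.sInter_finite⟩
  simp only [generateFrom_iUnion, ← induced_generateFrom_eq, ← hB.eq_generateFrom]
  rfl

theorem weightLE_closure (hB : IsTopologicalBasis B) (hBp : PointLE B 𝔠) {Y : Set X}
    (hY : #Y ≤ 𝔠) : WeightLE (closure Y) 𝔠 := by
  refine ⟨preimage (Subtype.val : closure Y → X) '' B, hB.isInducing .subtypeVal, ?_⟩
  have hsub : preimage (Subtype.val : closure Y → X) '' B ⊆
      insert ∅ (preimage Subtype.val '' {W ∈ B | (W ∩ Y).Nonempty}) := by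
    rintro _ ⟨W, hW, rfl⟩
    refine (eq_empty_or_nonempty _).imp_right fun ⟨y, hyW⟩ => mem_image_of_mem _ ⟨hW, ?_⟩
    exact mem_closure_iff.1 y.2 W (hB.isOpen hW) hyW
  calc #(preimage (Subtype.val : closure Y → X) '' B)
    _ ≤ _ := mk_le_mk_of_subset hsub
    _ ≤ 𝔠 := mk_insert_le_continuum <|
      mk_image_le.trans (hBp.mk_inter_nonempty_le_continuum hY)

theorem exists_countable_sUnion_eq_univ_of_isLindelof_closure (I : Type v) [LinearOrder I]
    [IsOmegaOneContinuum I] {𝒲 : Set (Set X)} (h𝒲 : ∀ W ∈ 𝒲, IsOpen W) (h𝒲p : PointLE 𝒲 𝔠)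
    (hcover : ⋃₀ 𝒲 = Set.univ) (hclosure : ∀ Y : Set X, #Y ≤ 𝔠 → IsLindelof (closure Y)) :
    ∃ 𝒱 ⊆ 𝒲, 𝒱.Countable ∧ ⋃₀ 𝒱 = Set.univ := by
  by_contra! hno
  have exists_uncovered : ∀ 𝒱 ⊆ 𝒲, 𝒱.Countable → ∃ x, x ∉ ⋃₀ 𝒱 := fun 𝒱 h𝒱 h𝒱c =>
    (ne_univ_iff_exists_notMem _).1 (hno 𝒱 h𝒱 h𝒱c)
  have : Nonempty X := (exists_uncovered ∅ (empty_subset 𝒲) countable_empty).nonempty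
  choose! p hp using exists_uncovered
  obtain ⟨Y, hYc, hY⟩ := exists_superset_of_countable_subset I
    (Φ := fun C => p '' {𝒱 | 𝒱 ⊆ {W ∈ 𝒲 | (W ∩ C).Nonempty} ∧ 𝒱.Countable}) fun C hC =>
      mk_image_le.trans <| mk_countable_subsets_le_continuum <|
        h𝒲p.mk_inter_nonempty_le_continuum (mk_le_continuum_of_countable hC)
  obtain ⟨𝒱, h𝒱, h𝒱c, hY𝒱⟩ := exists_countable_subset_sUnion_of_isLindelof (hclosure Y hYc)
    (𝒰 := {W ∈ 𝒲 | (W ∩ Y).Nonempty}) (fun W hW => h𝒲 W hW.1) fun x hx => by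
      obtain ⟨W, hW, hxW⟩ := hcover.superset (mem_univ x)
      exact ⟨W, ⟨hW, mem_closure_iff.1 hx W (h𝒲 W hW) hxW⟩, hxW⟩
  have inter_nonempty : ∀ W ∈ 𝒱, ∃ y, y ∈ W ∧ y ∈ Y := fun W hW => (h𝒱 hW).2
  choose! c hcW hcY using inter_nonempty
  have hpY : p 𝒱 ∈ Y := hY (c '' 𝒱) (image_subset_iff.2 hcY) (h𝒱c.image c) <|
    mem_image_of_mem p
      ⟨fun W hW => ⟨(h𝒱 hW).1, c W, hcW W hW, mem_image_of_mem c hW⟩, h𝒱c⟩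
  exact hp 𝒱 (fun W hW => (h𝒱 hW).1) h𝒱c (hY𝒱 (subset_closure hpY))

theorem lindelofSpace_of_isLindelof_closure (I : Type v) [LinearOrder I] [IsOmegaOneContinuum I]
    (hB : IsTopologicalBasis B) (hBp : PointLE B 𝔠)
    (hclosure : ∀ Y : Set X, #Y ≤ 𝔠 → IsLindelof (closure Y)) : LindelofSpace X := by
  refine quasiLindelofSp_iff_lindelofSpace.1 fun 𝒰 h𝒰 hcover => ?_
  have hrefine : ⋃₀ {W ∈ B | ∃ U ∈ 𝒰, W ⊆ U} = Set.univ := by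
    refine eq_univ_of_forall fun x => ?_
    obtain ⟨U, hU, hxU⟩ := hcover.superset (mem_univ x)
    obtain ⟨W, hW, hxW, hWU⟩ := hB.exists_subset_of_mem_open hxU (h𝒰 U hU)
    exact ⟨W, ⟨hW, U, hU, hWU⟩, hxW⟩
  obtain ⟨𝒱, h𝒱, h𝒱c, h𝒱u⟩ := exists_countable_sUnion_eq_univ_of_isLindelof_closure I
    (fun W hW => hB.isOpen hW.1) (hBp.mono (sep_subset _ _)) hrefine hclosure
  have exists_superset : ∀ V ∈ 𝒱, ∃ U ∈ 𝒰, V ⊆ U := fun V hV => (h𝒱 hV).2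
  choose! U hU hVU using exists_superset
  refine ⟨U '' 𝒱, image_subset_iff.2 hU, h𝒱c.image U, univ_subset_iff.1 (h𝒱u.superset.trans ?_)⟩
  exact sUnion_subset fun V hV => (hVU V hV).trans (subset_sUnion_of_mem (mem_image_of_mem U hV))

theorem ProductivelyLindelofSp.isLindelof_closure_pi_nat (I : Type u) [LinearOrder I]
    [IsOmegaOneContinuum I] (hX : ProductivelyLindelofSp X) (hB : IsTopologicalBasis B)
    (hBp : PointLE B 𝔠) {Y : Set (ℕ → X)} (hY : #Y ≤ 𝔠) : IsLindelof (closure Y) := by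
  let Z : Set X := closure (⋃ n, Function.eval n '' Y)
  have hZ : ProductivelyLindelofSp Z :=
    hX.of_isClosedEmbedding isClosed_closure.isClosedEmbedding_subtypeVal
  have hw : WeightLE Z 𝔠 := weightLE_closure hB hBp <|
    mk_iUnion_le_continuum (by simp [aleph0_le_continuum]) fun n => mk_image_le.trans hY
  have := (hZ.alsterSpace I hw).lindelofSpace_pi_nat
  have hrange : IsLindelof (Set.univ.pi fun _ : ℕ => Z) := by
    rw [← Subtype.range_coe (s := Z), ← range_piMap]
    exact isLindelof_range (Continuous.piMap fun _ => continuous_subtype_val)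
  refine hrange.of_isClosed_subset isClosed_closure (closure_minimal (fun f hf n _ => ?_)
    (isClosed_set_pi fun _ _ => isClosed_closure))
  exact subset_closure (mem_iUnion_of_mem n (mem_image_of_mem _ hf))

end PointContinuumBase

/-- Under CH, every productively Lindelöf space with a point-𝔠 base is
powerfully Lindelöf. -/
theorem stmt15 (hCH : Cardinal.continuum = Cardinal.aleph 1)
    (X : Type u) [TopologicalSpace X]
    (hprod : ProductivelyLindelofSp X)
    (hbase : ∃ B : Set (Set X), TopologicalSpace.IsTopologicalBasis B ∧
      PointLE B Cardinal.continuum) :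
    PowerfullyLindelofSp X := by
  obtain ⟨I, _, _⟩ := exists_isOmegaOneContinuum
    (continuum_eq_aleph_one_of_continuum_eq_aleph_one.{u} hCH)
  obtain ⟨B, hB, hBp⟩ := hbase
  obtain ⟨B', hB', hB'p⟩ := exists_isTopologicalBasis_pi_nat_pointLE hB hBp
  have := hprod.t3Space
  exact engLindelofSp_iff.2 ⟨inferInstance, lindelofSpace_of_isLindelof_closure I hB' hB'p
    fun Y hY => hprod.isLindelof_closure_pi_nat I hB hBp hY⟩
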